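/- arXiv:1904.02305 — 2 statements merged into one kernel-verified Lean document; each statement's English description precedes it below -/
import Mathlib

section
/- Let I = J + K be a Betti splitting of a monomial ideal I, i.e., the minimal generating set of I is the disjoint union of those of J and K, and β_{i,j}(I) = β_{i,j}(J) + β_{i,j}(K) + β_{i-1,j}(J∩K) for all i,j ≥ 0 (with β_{-1,j} = 0). Then reg(I) = max{reg(J), reg(K), reg(J∩K) − 1}. -/
open MvPolynomial

noncomputable section

namespace PaperReg

variable (k : Type) [Field k] (σ : Type)

/-- A graded free resolution of a homogeneous ideal `I` of `MvPolynomial σ k`: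
finite-rank free modules `Fin (rk i) →₀ S` with basis elements of degrees `deg i`,
degree-preserving differentials, exact, augmented onto `I`. -/
structure GradedFreeRes (I : Ideal (MvPolynomial σ k)) where
  rk : ℕ → ℕ
  deg : (i : ℕ) → Fin (rk i) → ℕ
  aug : (Fin (rk 0) →₀ MvPolynomial σ k) →ₗ[MvPolynomial σ k] MvPolynomial σ k
  d : (i : ℕ) →
    ((Fin (rk (i + 1)) →₀ MvPolynomial σ k) →ₗ[MvPolynomial σ k] (Fin (rk i) →₀ MvPolynomial σ k))
  aug_range : LinearMap.range aug = I
  exact_zero : LinearMap.range (d 0) = LinearMap.ker aug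
  exact_succ : ∀ i, LinearMap.range (d (i + 1)) = LinearMap.ker (d i)
  aug_graded : ∀ b, (aug (Finsupp.single b 1)).IsHomogeneous (deg 0 b)
  d_graded : ∀ i b c, (d i (Finsupp.single b 1)) c = 0 ∨
    ∃ m, deg (i + 1) b = deg i c + m ∧ ((d i (Finsupp.single b 1)) c).IsHomogeneous m

/-- The `(i,j)`-th graded Betti number of `I`: the minimal number of degree-`j` basis
elements in homological position `i`, over all graded free resolutions of `I`
(achieved by the minimal graded free resolution). -/
def betti (I : Ideal (MvPolynomial σ k)) (i j : ℕ) : ℕ :=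
  sInf { r | ∃ F : GradedFreeRes k σ I,
    r = (Finset.univ.filter (fun b => F.deg i b = j)).card }

/-- Castelnuovo–Mumford regularity: `reg I = max { j - i | betti I i j ≠ 0 }`. -/
def reg (I : Ideal (MvPolynomial σ k)) : ℕ :=
  sSup { r | ∃ i j : ℕ, betti k σ I i j ≠ 0 ∧ r = j - i }

/-- The monic monomial with exponent vector `a`. -/
def mon (a : σ →₀ ℕ) : MvPolynomial σ k := monomial a 1

/-- `I` is a monomial ideal. -/
def IsMonomialIdeal (I : Ideal (MvPolynomial σ k)) : Prop :=
  ∃ A : Set (σ →₀ ℕ), I = Ideal.span (mon k σ '' A)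

/-- The exponent vectors of the unique minimal set of monomial generators of a
monomial ideal: monomials of `I` minimal with respect to divisibility. -/
def minGens (I : Ideal (MvPolynomial σ k)) : Set (σ →₀ ℕ) :=
  { a | mon k σ a ∈ I ∧ ∀ b : σ →₀ ℕ, mon k σ b ∈ I → b ≤ a → b = a }

/-- The support of a monomial ideal: variables appearing in its minimal generators. -/
def isupp (I : Ideal (MvPolynomial σ k)) : Set σ :=
  ⋃ a ∈ minGens k σ I, ↑a.support

section Helpers

/-- Ranks of the (non-normalized) Taylor complex on `r` generators. -/
def tR (r : ℕ) : ℕ → ℕ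
  | 0 => 1
  | n + 1 => r * tR r n

/-- Decompose an index into its head and its tail. -/
def tSplit (r n : ℕ) : Fin (tR r (n + 1)) ≃ Fin r × Fin (tR r n) :=
  (finProdFinEquiv (m := r) (n := tR r n)).symm

/-- lcm of the generators in a tuple. -/
def tL {σ : Type} {r : ℕ} (m : Fin r → (σ →₀ ℕ)) : (n : ℕ) → Fin (tR r n) → (σ →₀ ℕ)
  | 0, _ => 0
  | n + 1, b => m (tSplit r n b).1 ⊔ tL m n (tSplit r n b).2

/-- Coefficients of the ordered simplicial chain complex. -/
def tC (k : Type) [Field k] (r : ℕ) : (n : ℕ) → Fin (tR r (n + 1)) → Fin (tR r n) → k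
  | 0, _, _ => 1
  | n + 1, b, g => (if (tSplit r (n + 1) b).2 = g then 1 else 0) -
      (if (tSplit r (n + 1) b).1 = (tSplit r n g).1 then
        tC k r n (tSplit r (n + 1) b).2 (tSplit r n g).2 else 0)

/-- Simplicial differential. -/
def tD (k : Type) [Field k] (r n : ℕ) : (Fin (tR r (n + 1)) → k) →ₗ[k] (Fin (tR r n) → k) :=
  Matrix.mulVecLin (Matrix.of fun g b => tC k r n b g)

/-- Cone homotopy. -/
def tH {k : Type} [Field k] {r n : ℕ} (i : Fin r) (y : Fin (tR r n) → k) :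
    Fin (tR r (n + 1)) → k :=
  fun b => if (tSplit r n b).1 = i then y (tSplit r n b).2 else 0

lemma tD_apply (k : Type) [Field k] (r n : ℕ) (y : Fin (tR r (n + 1)) → k) (g : Fin (tR r n)) :
    tD k r n y g = ∑ b, tC k r n b g * y b := by
  simp [tD, Matrix.mulVec, dotProduct]

lemma tD_zero_tH {k : Type} [Field k] {r : ℕ} (i : Fin r) (y : Fin (tR r 0) → k) :
    tD k r 0 (tH i y) = y := by
  ext g
  rw [tD_apply, ← (tSplit r 0).symm.sum_comp, Fintype.sum_prod_type]
  have : Subsingleton (Fin (tR r 0)) := inferInstanceAs (Subsingleton (Fin 1))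
  have : Unique (Fin (tR r 0)) := inferInstanceAs (Unique (Fin 1))
  simp only [tC, tH, Equiv.apply_symm_apply, one_mul, Fintype.sum_unique]
  rw [Finset.sum_ite_eq' Finset.univ i]
  simp [Subsingleton.elim g default]

lemma tD_succ_tH {k : Type} [Field k] {r n : ℕ} (i : Fin r) (y : Fin (tR r (n + 1)) → k) :
    tD k r (n + 1) (tH i y) = y - tH i (tD k r n y) := by
  ext g
  rw [tD_apply, ← (tSplit r (n + 1)).symm.sum_comp, Fintype.sum_prod_type]
  simp only [tC, tH, Equiv.apply_symm_apply, mul_ite, mul_zero, Pi.sub_apply]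
  rw [Finset.sum_comm]
  simp only [Finset.sum_ite_eq', Finset.mem_univ, if_true, sub_mul, Finset.sum_sub_distrib,
    ite_mul, one_mul, zero_mul, tD_apply]
  congr 1
  by_cases h : (tSplit r n g).1 = i
  · simp [h]
  · simp [h, Ne.symm h]

lemma sum_tH {k : Type} [Field k] {r n : ℕ} (y : Fin (tR r (n + 1)) → k) :
    y = ∑ i, tH i (fun f => y ((tSplit r n).symm (i, f))) := by
  ext b
  simp [tH, Finset.sum_apply]

lemma tD_tD (k : Type) [Field k] (r n : ℕ) (y : Fin (tR r (n + 2)) → k) :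
    tD k r n (tD k r (n + 1) y) = 0 := by
  induction n with
  | zero =>
    rw [sum_tH y, map_sum, map_sum]
    refine Finset.sum_eq_zero fun i _ => ?_
    rw [tD_succ_tH, map_sub, tD_zero_tH, sub_self]
  | succ n ih =>
    rw [sum_tH y, map_sum, map_sum]
    refine Finset.sum_eq_zero fun i _ => ?_
    rw [tD_succ_tH, map_sub, tD_succ_tH, ih]
    ext; simp [tH]

lemma tC_ne {k : Type} [Field k] {σ : Type} {r : ℕ} (m : Fin r → (σ →₀ ℕ)) (n : ℕ)
    (b : Fin (tR r (n + 1))) (g : Fin (tR r n)) (h : tC k r n b g ≠ 0) :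
    tL m n g ≤ tL m (n + 1) b := by
  induction n with
  | zero => simp [tL]
  | succ n ih =>
    rw [tC] at h
    by_cases h1 : (tSplit r (n + 1) b).2 = g
    · rw [tL.eq_2 m (n + 1), h1]; exact le_sup_right
    · by_cases h2 : (tSplit r (n + 1) b).1 = (tSplit r n g).1
      · simp only [h1, h2, if_true, if_false, zero_sub, ne_eq, neg_eq_zero] at h
        rw [tL.eq_2 m (n + 1), tL.eq_2 m n, h2]
        exact sup_le_sup le_rfl (ih _ _ h)
      · simp [h1, h2] at h

lemma tL_le {σ : Type} {r : ℕ} (m : Fin r → (σ →₀ ℕ)) (n : ℕ) (b : Fin (tR r n)) :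
    tL m n b ≤ ∑ i, m i := by
  induction n with
  | zero => simp [tL]
  | succ n ih =>
    rw [tL]
    exact sup_le (Finset.single_le_sum (f := m) (fun _ _ => zero_le) (Finset.mem_univ _)) (ih _)

variable {k σ}

/-- The Taylor-type differential. -/
def td (k : Type) [Field k] {σ : Type} {r : ℕ} (m : Fin r → (σ →₀ ℕ)) (n : ℕ) :
    (Fin (tR r (n + 1)) →₀ MvPolynomial σ k) →ₗ[MvPolynomial σ k]
      (Fin (tR r n) →₀ MvPolynomial σ k) :=
  Finsupp.linearCombination (MvPolynomial σ k) fun b => Finsupp.equivFunOnFinite.symm fun g =>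
    monomial (tL m (n + 1) b - tL m n g) (tC k r n b g)

lemma td_single {r : ℕ} (m : Fin r → (σ →₀ ℕ)) (n : ℕ) (b : Fin (tR r (n + 1)))
    (g : Fin (tR r n)) :
    td k m n (Finsupp.single b 1) g =
      monomial (tL m (n + 1) b - tL m n g) (tC k r n b g) := by
  simp [td]

lemma td_apply {r : ℕ} (m : Fin r → (σ →₀ ℕ)) (n : ℕ)
    (x : Fin (tR r (n + 1)) →₀ MvPolynomial σ k) (g : Fin (tR r n)) :
    td k m n x g = ∑ b, x b * monomial (tL m (n + 1) b - tL m n g) (tC k r n b g) := by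
  rw [td, Finsupp.linearCombination_apply, Finsupp.sum_fintype _ _ (by simp)]
  simp [Finsupp.finsetSum_apply]

/-- The strand in multidegree `a`. -/
def tphi {r : ℕ} (m : Fin r → (σ →₀ ℕ)) (n : ℕ) (a : σ →₀ ℕ)
    (x : Fin (tR r n) →₀ MvPolynomial σ k) : Fin (tR r n) → k :=
  fun b => coeff a (monomial (tL m n b) 1 * x b)

lemma tphi_td {r : ℕ} (m : Fin r → (σ →₀ ℕ)) (n : ℕ) (a : σ →₀ ℕ)
    (x : Fin (tR r (n + 1)) →₀ MvPolynomial σ k) :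
    tphi m n a (td k m n x) = tD k r n (tphi m (n + 1) a x) := by
  ext g
  rw [tD_apply, tphi, td_apply, Finset.mul_sum, coeff_sum]
  refine Finset.sum_congr rfl fun b _ => ?_
  rw [tphi, ← coeff_C_mul]
  congr 1
  by_cases h : tC k r n b g = 0
  · simp [h]
  · have := tC_ne m n b g h
    rw [mul_comm (x b), ← mul_assoc, monomial_mul, add_tsub_cancel_of_le this, ← mul_assoc,
      C_mul_monomial, mul_one, one_mul]

lemma tphi_inj {r : ℕ} (m : Fin r → (σ →₀ ℕ)) (n : ℕ)
    {x y : Fin (tR r n) →₀ MvPolynomial σ k} (h : ∀ a, tphi m n a x = tphi m n a y) : x = y := by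
  ext b a
  have := congrFun (h (tL m n b + a)) b
  simpa [tphi, coeff_monomial_mul] using this

lemma exists_strand {r : ℕ} (m : Fin r → (σ →₀ ℕ)) (n : ℕ) (A : Finset (σ →₀ ℕ))
    (z : (σ →₀ ℕ) → Fin (tR r n) → k) (hA : ∀ a ∉ A, z a = 0)
    (hz : ∀ a b, z a b ≠ 0 → tL m n b ≤ a) :
    ∃ w : Fin (tR r n) →₀ MvPolynomial σ k, ∀ a, tphi m n a w = z a := by
  classical
  refine ⟨Finsupp.equivFunOnFinite.symm fun b => ∑ a ∈ A, monomial (a - tL m n b) (z a b), ?_⟩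
  intro a
  ext b
  rw [tphi, Finsupp.equivFunOnFinite_symm_apply_apply, Finset.mul_sum, coeff_sum]
  have : ∀ a' ∈ A, coeff a (monomial (tL m n b) (1 : k) * monomial (a' - tL m n b) (z a' b)) =
      if a' = a then z a' b else 0 := by
    intro a' _
    rw [monomial_mul, one_mul]
    by_cases h : z a' b = 0
    · simp [h]
    · rw [add_tsub_cancel_of_le (hz a' b h), coeff_monomial]
  rw [Finset.sum_congr rfl this, Finset.sum_ite_eq']
  split_ifs with h
  · rfl
  · rw [hA a h]; rfl

lemma td_exact {r : ℕ} (m : Fin r → (σ →₀ ℕ)) (n : ℕ) :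
    LinearMap.range (td k m (n + 1)) = LinearMap.ker (td k m n) := by
  classical
  apply le_antisymm
  · rintro _ ⟨x, rfl⟩
    rw [LinearMap.mem_ker]
    apply tphi_inj m n
    intro a
    rw [tphi_td, tphi_td, tD_tD]
    ext; simp [tphi]
  · intro x hx
    rw [LinearMap.mem_ker] at hx
    have hD : ∀ a, tD k r n (tphi m (n + 1) a x) = 0 := by
      intro a
      rw [← tphi_td, hx]
      ext; simp [tphi]
    have hsupp : ∀ a b, tphi m (n + 1) a x b ≠ 0 → tL m (n + 1) b ≤ a := by
      intro a b h
      by_contra hc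
      exact h (by rw [tphi, coeff_monomial_mul', if_neg hc])
    obtain ⟨w, hw⟩ := exists_strand (k := k) m (n + 2)
      (Finset.univ.biUnion fun b => (monomial (tL m (n + 1) b) 1 * x b).support)
      (fun a => if h : ∃ i, m i ≤ a then tH h.choose (tphi m (n + 1) a x) else 0)
      (by
        intro a ha
        have h0 : tphi m (n + 1) a x = 0 := by
          ext b
          by_contra hc
          exact ha (Finset.mem_biUnion.2 ⟨b, Finset.mem_univ _, mem_support_iff.2 hc⟩)
        split_ifs with h
        · rw [h0]; ext; simp [tH]
        · rfl)
      (by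
        intro a b hb
        split_ifs at hb with h
        · rw [tH] at hb
          split_ifs at hb with h1
          · rw [tL, h1]
            exact sup_le h.choose_spec (hsupp _ _ hb)
          · exact absurd rfl hb
        · exact absurd rfl hb)
    refine ⟨w, tphi_inj m _ fun a => ?_⟩
    rw [tphi_td, hw]
    split_ifs with h
    · rw [tD_succ_tH, hD]
      ext; simp [tH]
    · rw [map_zero]
      ext b
      by_contra hc
      refine h ⟨(tSplit r n b).1, le_trans ?_ (hsupp a b (Ne.symm hc))⟩
      rw [tL]
      exact le_sup_left

/-- The empty tuple. -/
def tZero (r : ℕ) : Fin (tR r 0) := (0 : Fin 1)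

/-- The resolution. -/
def taylorRes {r : ℕ} (m : Fin r → (σ →₀ ℕ)) (I : Ideal (MvPolynomial σ k))
    (hI : I = Ideal.span (Set.range fun i => mon k σ (m i))) : GradedFreeRes k σ I where
  rk i := tR r (i + 1)
  deg i b := (tL m (i + 1) b).degree
  aug := (Finsupp.lapply (tZero r)).comp (td k m 0)
  d i := td k m (i + 1)
  aug_range := by
    have h1 : (Finsupp.lapply (tZero r)).comp (td k m 0) =
        Finsupp.linearCombination (MvPolynomial σ k)
          (fun b : Fin (tR r 1) => mon k σ (m (tSplit r 0 b).1)) := by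
      ext b : 2
      simp only [LinearMap.comp_apply, Finsupp.lsingle_apply, Finsupp.lapply_apply]
      refine (td_single m 0 b (tZero r)).trans ?_
      simp [tL, tC, mon]
    rw [h1, Finsupp.range_linearCombination, hI, Ideal.span]
    congr 1
    ext p
    constructor
    · rintro ⟨b, rfl⟩
      exact ⟨_, rfl⟩
    · rintro ⟨i, rfl⟩
      exact ⟨(tSplit r 0).symm (i, (tZero r)), by simp⟩
  exact_zero := by
    rw [td_exact]
    ext x
    simp only [LinearMap.mem_ker, LinearMap.comp_apply, Finsupp.lapply_apply]
    constructor
    · intro h; simp [h]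
    · intro h
      ext g : 1
      have : g = tZero r := Subsingleton.elim (α := Fin 1) _ _
      rw [this]
      exact h
  exact_succ i := td_exact m (i + 1)
  aug_graded b := by
    simp only [LinearMap.comp_apply, Finsupp.lapply_apply]
    rw [show (td k m 0 (Finsupp.single b 1)) (tZero r) = _ from td_single m 0 b (tZero r)]
    refine isHomogeneous_monomial _ ?_
    simp [tL]
  d_graded i b c := by
    rw [td_single]
    by_cases h : tC k r (i + 1) b c = 0
    · left; simp [h]
    · right
      refine ⟨(tL m (i + 1 + 1) b - tL m (i + 1) c).degree, ?_, isHomogeneous_monomial _ rfl⟩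
      rw [← map_add, add_tsub_cancel_of_le (tC_ne m _ b c h)]

lemma reg_bdd (I : Ideal (MvPolynomial σ k)) (hI : IsMonomialIdeal k σ I) :
    BddAbove { r | ∃ i j : ℕ, betti k σ I i j ≠ 0 ∧ r = j - i } := by
  classical
  by_cases hF : Nonempty (GradedFreeRes k σ I)
  swap
  · refine ⟨0, ?_⟩
    rintro _ ⟨i, j, h, -⟩
    exfalso
    apply h
    rw [betti]
    convert Nat.sInf_empty
    ext r
    simp only [Set.mem_ofPred_eq, Set.mem_empty_iff_false, iff_false]
    rintro ⟨F, -⟩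
    exact hF ⟨F⟩
  obtain ⟨F⟩ := hF
  have hfg : I.FG := by
    rw [← F.aug_range, LinearMap.range_eq_map]
    exact Submodule.FG.map _ Module.Finite.fg_top
  obtain ⟨A, hA⟩ := hI
  have hfg' := hfg
  rw [hA] at hfg'
  obtain ⟨s, hs, hs'⟩ := (Submodule.fg_span_iff_fg_span_finset_subset _).1 hfg'
  have hch : ∀ i : Fin s.card, ∃ a, mon k σ a = (s.equivFin.symm i : MvPolynomial σ k) := by
    intro i
    obtain ⟨a, -, h⟩ := hs (s.equivFin.symm i).2
    exact ⟨a, h⟩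
  choose m hm using hch
  have hI : I = Ideal.span (Set.range fun i => mon k σ (m i)) := by
    rw [hA, Ideal.span, hs', Ideal.span]
    congr 1
    ext p
    constructor
    · intro hp
      exact ⟨s.equivFin ⟨p, hp⟩, by simp [hm]⟩
    · rintro ⟨i, rfl⟩
      simp [hm]
  refine ⟨(∑ i, m i).degree, ?_⟩
  rintro _ ⟨i, j, h, rfl⟩
  let T := taylorRes m I hI
  have hle : betti k σ I i j ≤ (Finset.univ.filter (fun b => T.deg i b = j)).card :=
    Nat.sInf_le ⟨T, rfl⟩
  have hpos : 0 < (Finset.univ.filter (fun b => T.deg i b = j)).card := by omega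
  obtain ⟨b, hb⟩ := Finset.card_pos.1 hpos
  have hb' : (tL m (i + 1) b).degree = j := (Finset.mem_filter.1 hb).2
  have := Finsupp.degree_mono (tL_le m (i + 1) b)
  omega

end Helpers

/-- If `I = J + K` is a Betti splitting of the monomial ideal `I`
(minimal generators of `I` are the disjoint union of those of `J` and `K`, and the
Betti numbers split), then `reg I = max {reg J, reg K, reg (J ⊓ K) - 1}`. -/
theorem reg_of_bettiSplitting
    (I J K : Ideal (MvPolynomial σ k))
    (hImon : IsMonomialIdeal k σ I) (hJmon : IsMonomialIdeal k σ J)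
    (hKmon : IsMonomialIdeal k σ K)
    (hsum : I = J ⊔ K)
    (hunion : minGens k σ I = minGens k σ J ∪ minGens k σ K)
    (hdisj : minGens k σ J ∩ minGens k σ K = ∅)
    (hsplit : ∀ i j : ℕ, betti k σ I i j =
      betti k σ J i j + betti k σ K i j +
        (if i = 0 then 0 else betti k σ (J ⊓ K) (i - 1) j)) :
    reg k σ I = max (reg k σ J) (max (reg k σ K) (reg k σ (J ⊓ K) - 1)) := by
  have hb := reg_bdd I hImon
  have hmem : ∀ r i j, betti k σ I i j ≠ 0 → r = j - i → r ≤ reg k σ I := fun r i j h1 h2 =>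
    le_csSup hb ⟨i, j, h1, h2⟩
  have hJ : ∀ i j, betti k σ J i j ≠ 0 → j - i ≤ reg k σ I := fun i j h =>
    hmem _ i j (by rw [hsplit]; omega) rfl
  have hK : ∀ i j, betti k σ K i j ≠ 0 → j - i ≤ reg k σ I := fun i j h =>
    hmem _ i j (by rw [hsplit]; omega) rfl
  have hJK : ∀ i j, betti k σ (J ⊓ K) i j ≠ 0 → j - i ≤ reg k σ I + 1 := fun i j h => by
    have := hmem _ (i + 1) j (by rw [hsplit]; simp [h]) rfl
    omega
  have bound : ∀ (L : Ideal (MvPolynomial σ k)) (N : ℕ),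
      (∀ i j, betti k σ L i j ≠ 0 → j - i ≤ N) →
      reg k σ L ≤ N ∧ ∀ i j, betti k σ L i j ≠ 0 → j - i ≤ reg k σ L := by
    intro L N h
    have hN : ∀ r ∈ { r | ∃ i j : ℕ, betti k σ L i j ≠ 0 ∧ r = j - i }, r ≤ N := by
      rintro _ ⟨i, j, h1, rfl⟩
      exact h i j h1
    exact ⟨csSup_le' hN, fun i j h1 => le_csSup ⟨N, hN⟩ ⟨i, j, h1, rfl⟩⟩
  obtain ⟨hJ1, hJ2⟩ := bound J _ hJ
  obtain ⟨hK1, hK2⟩ := bound K _ hK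
  obtain ⟨hL1, hL2⟩ := bound (J ⊓ K) _ hJK
  apply le_antisymm
  · refine (bound I _ fun i j h => ?_).1
    rw [hsplit] at h
    by_cases h1 : betti k σ J i j = 0
    · by_cases h2 : betti k σ K i j = 0
      · by_cases h3 : i = 0
        · rw [h1, h2, if_pos h3] at h
          exact absurd rfl h
        · have := hL2 (i - 1) j (by simpa [h1, h2, h3] using h)
          omega
      · have := hK2 i j h2
        omega
    · have := hJ2 i j h1
      omega
  · omega

end PaperReg
end
end

section
/- Let I ⊂ S = k[x_1,...,x_n] be a monomial ideal and I^P ⊂ S^P its polarization. Then β_{i,j}(I) = β_{i,j}(I^P) for all i, j, and in particular reg(I) = reg(I^P). -/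
open MvPolynomial

noncomputable section

namespace PaperReg

variable (k : Type) [Field k] (σ : Type)

/-- The polarization of an exponent vector: `x_1^{a_1}···x_n^{a_n}` becomes
`∏_i ∏_{j < a_i} x_{(i,j)}`. -/
def polarize (u : σ →₀ ℕ) : (σ × ℕ) →₀ ℕ :=
  u.sum fun i a => (Finset.range a).sum fun j => Finsupp.single (i, j) 1

/-- The polarization of a monomial ideal: the squarefree monomial ideal generated by
the polarizations of its minimal monomial generators. -/
def polarIdeal (I : Ideal (MvPolynomial σ k)) : Ideal (MvPolynomial (σ × ℕ) k) :=
  Ideal.span ((fun a => monomial (polarize σ a) (1 : k)) '' minGens k σ I)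


section Aux

variable {k : Type} [Field k] {σ : Type}

/-- Elements of a graded free module all of whose terms have degree in `Q`. -/
def HH {ι : Type} (deg : ι → ℕ) (Q : Set ℕ) : Submodule k (ι →₀ MvPolynomial σ k) where
  carrier := {x | ∀ c u, coeff u (x c) ≠ 0 → deg c + u.degree ∈ Q}
  zero_mem' := by intro c u h; simp at h
  add_mem' := by
    intro x y hx hy c u h
    by_cases h1 : coeff u (x c) = 0
    · by_cases h2 : coeff u (y c) = 0
      · simp [h1, h2] at h
      · exact hy c u h2
    · exact hx c u h1
  smul_mem' := by
    intro a x hx c u h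
    apply hx c u
    intro h0
    simp [h0] at h

/-- Degree-preserving maps. -/
def Graded {α β : Type} (dα : α → ℕ) (dβ : β → ℕ)
    (f : (α →₀ MvPolynomial σ k) →ₗ[MvPolynomial σ k] (β →₀ MvPolynomial σ k)) : Prop :=
  ∀ p x, x ∈ HH dα {p} → f x ∈ HH dβ {p}

theorem HH_mono {ι : Type} (deg : ι → ℕ) {Q R : Set ℕ} (h : Q ⊆ R) :
    (HH deg Q : Submodule k (ι →₀ MvPolynomial σ k)) ≤ HH deg R :=
  fun _ hx c u hu => h (hx c u hu)

theorem HH_single {ι : Type} (deg : ι → ℕ) (Q : Set ℕ) (c : ι) (s : MvPolynomial σ k)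
    (h : ∀ u, coeff u s ≠ 0 → deg c + u.degree ∈ Q) : Finsupp.single c s ∈ HH deg Q := by
  classical
  intro c' u hu
  rw [Finsupp.single_apply] at hu
  split_ifs at hu with hc
  · subst hc; exact h u hu
  · simp at hu

theorem HH_smul {ι : Type} (deg : ι → ℕ) (s : MvPolynomial σ k) (m p : ℕ)
    (x : ι →₀ MvPolynomial σ k)
    (hs : ∀ u, coeff u s ≠ 0 → u.degree + m = p) (hx : x ∈ HH deg {m}) :
    s • x ∈ HH deg {p} := by
  classical
  intro c u hu
  rw [Finsupp.smul_apply, smul_eq_mul, coeff_mul] at hu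
  obtain ⟨⟨a, b⟩, hab, hne⟩ := Finset.exists_ne_zero_of_sum_ne_zero hu
  rw [Finset.HasAntidiagonal.mem_antidiagonal] at hab
  have h1 := hs a (left_ne_zero_of_mul hne)
  have h2 := hx c b (right_ne_zero_of_mul hne)
  simp only [Set.mem_singleton_iff] at h2 ⊢
  rw [← hab]
  simp only [map_add]
  omega

theorem graded_of_basis {α β : Type} (dα : α → ℕ) (dβ : β → ℕ)
    (f : (α →₀ MvPolynomial σ k) →ₗ[MvPolynomial σ k] (β →₀ MvPolynomial σ k))
    (h : ∀ b, f (Finsupp.single b 1) ∈ HH dβ {dα b}) : Graded dα dβ f := by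
  intro p x hx
  have : x = x.sum fun b s => s • Finsupp.single b 1 := by
    conv_lhs => rw [← Finsupp.sum_single x]
    simp
  rw [this, Finsupp.sum, map_sum]
  refine Submodule.sum_mem _ fun b _ => ?_
  rw [map_smul]
  refine HH_smul dβ _ (dα b) p _ (fun u hu => ?_) (h b)
  have := hx b u hu
  simp only [Set.mem_singleton_iff] at this
  omega

theorem Graded.map_HH {α β : Type} {dα : α → ℕ} {dβ : β → ℕ}
    {f : (α →₀ MvPolynomial σ k) →ₗ[MvPolynomial σ k] (β →₀ MvPolynomial σ k)}
    (hf : Graded dα dβ f) (Q : Set ℕ) {x} (hx : x ∈ HH dα Q) : f x ∈ HH dβ Q := by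
  classical
  have : x = ∑ b ∈ x.support, ∑ u ∈ (x b).support,
      Finsupp.single b (monomial u (coeff u (x b))) := by
    conv_lhs => rw [← Finsupp.sum_single x]
    rw [Finsupp.sum]
    refine Finset.sum_congr rfl fun b _ => ?_
    conv_lhs => rw [MvPolynomial.as_sum (x b)]
    exact Finsupp.single_sum _ _ _
  rw [this, map_sum]
  refine Submodule.sum_mem _ fun b _ => ?_
  rw [map_sum]
  refine Submodule.sum_mem _ fun u hu => ?_
  have h1 := hx b u (mem_support_iff.1 hu)
  refine HH_mono dβ (Q := {dα b + u.degree}) (by simpa using h1) (hf _ _ ?_)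
  refine HH_single _ _ _ _ fun v hv => ?_
  rw [coeff_monomial] at hv
  split_ifs at hv with hc
  · subst hc; rfl
  · exact absurd rfl hv

theorem Graded.comp {α β γ : Type} {dα : α → ℕ} {dβ : β → ℕ} {dγ : γ → ℕ}
    {f : (α →₀ MvPolynomial σ k) →ₗ[MvPolynomial σ k] (β →₀ MvPolynomial σ k)}
    {g : (β →₀ MvPolynomial σ k) →ₗ[MvPolynomial σ k] (γ →₀ MvPolynomial σ k)}
    (hg : Graded dβ dγ g) (hf : Graded dα dβ f) : Graded dα dγ (g ∘ₗ f) :=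
  fun p x hx => hg p _ (hf p x hx)

theorem Graded.sub {α β : Type} {dα : α → ℕ} {dβ : β → ℕ}
    {f g : (α →₀ MvPolynomial σ k) →ₗ[MvPolynomial σ k] (β →₀ MvPolynomial σ k)}
    (hf : Graded dα dβ f) (hg : Graded dα dβ g) : Graded dα dβ (f - g) :=
  fun p x hx => Submodule.sub_mem _ (hf p x hx) (hg p x hx)

theorem Graded.zero {α β : Type} {dα : α → ℕ} {dβ : β → ℕ} :
    Graded dα dβ (0 : (α →₀ MvPolynomial σ k) →ₗ[MvPolynomial σ k] (β →₀ MvPolynomial σ k)) :=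
  fun _ _ _ => Submodule.zero_mem _

theorem Graded.id {α : Type} {dα : α → ℕ} :
    Graded dα dα
      (LinearMap.id : (α →₀ MvPolynomial σ k) →ₗ[MvPolynomial σ k] (α →₀ MvPolynomial σ k)) :=
  fun _ _ hx => hx

/-- Existence of the decomposition into the degree `p` part and the rest. -/
theorem exists_part {α : Type} (dα : α → ℕ) (p : ℕ) (x : α →₀ MvPolynomial σ k) :
    ∃ y ∈ HH dα {p}, x - y ∈ HH dα ({p}ᶜ) := by
  classical
  refine ⟨Finsupp.onFinset x.support
    (fun c => if dα c ≤ p then homogeneousComponent (p - dα c) (x c) else 0) ?_, ?_, ?_⟩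
  · intro c hc
    rw [Finsupp.mem_support_iff]
    intro h
    simp [h] at hc
  · intro c u hu
    simp only [Finsupp.onFinset_apply] at hu
    split_ifs at hu with h1
    · rw [coeff_homogeneousComponent] at hu
      split_ifs at hu with h2
      · simp only [Set.mem_singleton_iff]; omega
      · exact absurd rfl hu
    · simp at hu
  · intro c u hu
    simp only [Finsupp.sub_apply, Finsupp.onFinset_apply, coeff_sub] at hu
    simp only [Set.mem_compl_iff, Set.mem_singleton_iff]
    intro h
    apply hu
    rw [if_pos (by omega), coeff_homogeneousComponent, if_pos (by omega), sub_self]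

theorem HH_disjoint {α : Type} (dα : α → ℕ) (p : ℕ) (x : α →₀ MvPolynomial σ k)
    (h1 : x ∈ HH dα {p}) (h2 : x ∈ HH dα ({p}ᶜ)) : x = 0 := by
  ext c u
  by_contra h
  exact h2 c u h (h1 c u h)

theorem Graded.lift_elem {α β : Type} {dα : α → ℕ} {dβ : β → ℕ}
    {f : (α →₀ MvPolynomial σ k) →ₗ[MvPolynomial σ k] (β →₀ MvPolynomial σ k)}
    (hf : Graded dα dβ f) (p : ℕ) {y} (hy : y ∈ HH dβ {p}) (hr : y ∈ LinearMap.range f) :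
    ∃ x ∈ HH dα {p}, f x = y := by
  obtain ⟨x, rfl⟩ := hr
  obtain ⟨z, hz, hxz⟩ := exists_part dα p x
  refine ⟨z, hz, ?_⟩
  have h1 := hf.map_HH _ hxz
  have h2 := Submodule.sub_mem _ hy (hf _ _ hz)
  rw [map_sub] at h1
  exact (sub_eq_zero.1 (HH_disjoint dβ p _ h2 h1)).symm

theorem single_mem_HH {α : Type} (dα : α → ℕ) (b : α) (a : k) :
    Finsupp.single b (C a : MvPolynomial σ k) ∈ HH dα {dα b} := by
  classical
  refine HH_single _ _ _ _ fun u hu => ?_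
  rw [coeff_C] at hu
  split_ifs at hu with h
  · subst h; simp
  · exact absurd rfl hu

/-- Graded lifting. -/
theorem exists_lift {α β γ : Type} {dα : α → ℕ} {dβ : β → ℕ} {dγ : γ → ℕ}
    {f : (β →₀ MvPolynomial σ k) →ₗ[MvPolynomial σ k] (γ →₀ MvPolynomial σ k)}
    {u : (α →₀ MvPolynomial σ k) →ₗ[MvPolynomial σ k] (γ →₀ MvPolynomial σ k)}
    (hf : Graded dβ dγ f) (hu : Graded dα dγ u) (h : ∀ x, u x ∈ LinearMap.range f) :
    ∃ v : (α →₀ MvPolynomial σ k) →ₗ[MvPolynomial σ k] (β →₀ MvPolynomial σ k),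
      Graded dα dβ v ∧ f ∘ₗ v = u := by
  have key : ∀ b : α, ∃ x ∈ (HH dβ {dα b} : Submodule k (β →₀ MvPolynomial σ k)),
      f x = u (Finsupp.single b 1) := fun b =>
    hf.lift_elem (dα b) (hu _ _ (by simpa using single_mem_HH dα b (1 : k))) (h _)
  choose w hw1 hw2 using key
  refine ⟨Finsupp.linearCombination _ w, graded_of_basis _ _ _ fun b => ?_, ?_⟩
  · simpa using hw1 b
  · ext1 b
    ext1
    simp [hw2]

/-- Reduction modulo the irrelevant ideal. -/
def eps (ι : Type) : (ι →₀ MvPolynomial σ k) →ₗ[k] (ι →₀ k) :=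
  Finsupp.mapRange.linearMap ((MvPolynomial.aeval (R := k) (fun _ : σ => (0 : k))).toLinearMap)

theorem eps_apply {ι : Type} (x : ι →₀ MvPolynomial σ k) (c : ι) :
    eps ι x c = coeff 0 (x c) := by
  simp only [eps, Finsupp.mapRange.linearMap_apply, Finsupp.mapRange_apply]
  change MvPolynomial.aeval (fun _ : σ => (0 : k)) (x c) = _
  rw [MvPolynomial.aeval_zero']
  simp [constantCoeff_eq]

/-- Inclusion of constants. -/
def iot (ι : Type) : (ι →₀ k) →ₗ[k] (ι →₀ MvPolynomial σ k) :=
  Finsupp.mapRange.linearMap (Algebra.linearMap k (MvPolynomial σ k))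

theorem iot_apply {ι : Type} (x : ι →₀ k) (c : ι) :
    (iot ι x : ι →₀ MvPolynomial σ k) c = C (x c) := by
  simp [iot, MvPolynomial.algebraMap_eq]

theorem iot_single {ι : Type} (c : ι) (a : k) :
    (iot ι (Finsupp.single c a) : ι →₀ MvPolynomial σ k) = Finsupp.single c (C a) := by
  simp [iot, MvPolynomial.algebraMap_eq]

theorem eps_iot {ι : Type} (x : ι →₀ k) : eps ι (iot ι x : ι →₀ MvPolynomial σ k) = x := by
  ext c
  rw [eps_apply, iot_apply, coeff_zero_C]

theorem eps_smul {ι : Type} (s : MvPolynomial σ k) (x : ι →₀ MvPolynomial σ k) :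
    eps ι (s • x) = coeff 0 s • eps ι x := by
  ext c
  simp only [eps_apply, Finsupp.smul_apply, smul_eq_mul]
  simp only [← constantCoeff_eq, map_mul]

/-- The map induced on reductions. -/
def bar {α β : Type}
    (f : (α →₀ MvPolynomial σ k) →ₗ[MvPolynomial σ k] (β →₀ MvPolynomial σ k)) :
    (α →₀ k) →ₗ[k] (β →₀ k) :=
  eps β ∘ₗ (f.restrictScalars k) ∘ₗ iot α

theorem bar_eps {α β : Type}
    (f : (α →₀ MvPolynomial σ k) →ₗ[MvPolynomial σ k] (β →₀ MvPolynomial σ k)) (x) :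
    bar f (eps α x) = eps β (f x) := by
  induction x using Finsupp.induction_linear with
  | zero => simp
  | add x y hx hy => simp [hx, hy]
  | single b s =>
    have h1 : Finsupp.single b s = s • Finsupp.single b (1 : MvPolynomial σ k) := by simp
    have h2 : eps α (Finsupp.single b (1 : MvPolynomial σ k)) = Finsupp.single b (1 : k) := by
      rw [← C_1, ← iot_single, eps_iot]
    rw [h1, eps_smul, f.map_smul, eps_smul, (bar f).map_smul, h2]
    congr 1
    simp [bar, iot_single]

theorem bar_comp {α β γ : Type}
    (f : (α →₀ MvPolynomial σ k) →ₗ[MvPolynomial σ k] (β →₀ MvPolynomial σ k))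
    (g : (β →₀ MvPolynomial σ k) →ₗ[MvPolynomial σ k] (γ →₀ MvPolynomial σ k)) (x) :
    bar (g ∘ₗ f) x = bar g (bar f x) := by
  have : bar f x = eps β (f (iot α x)) := rfl
  rw [this, bar_eps]
  rfl

theorem bar_add {α β : Type}
    (f g : (α →₀ MvPolynomial σ k) →ₗ[MvPolynomial σ k] (β →₀ MvPolynomial σ k)) (x) :
    bar (f + g) x = bar f x + bar g x := by
  simp [bar]

theorem bar_sub {α β : Type}
    (f g : (α →₀ MvPolynomial σ k) →ₗ[MvPolynomial σ k] (β →₀ MvPolynomial σ k)) (x) :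
    bar (f - g) x = bar f x - bar g x := by
  simp [bar]

theorem bar_id {α : Type} (x) :
    bar (LinearMap.id : (α →₀ MvPolynomial σ k) →ₗ[MvPolynomial σ k] (α →₀ MvPolynomial σ k)) x
      = x := by
  simp [bar, eps_iot]

/-- The degree `j` part of the reduction. -/
def WW (k : Type) [Field k] {α : Type} (dα : α → ℕ) (j : ℕ) : Submodule k (α →₀ k) :=
  Finsupp.supported k k {b | dα b = j}

theorem mem_WW {α : Type} (dα : α → ℕ) (j : ℕ) (x : α →₀ k) :
    x ∈ WW k dα j ↔ ∀ b, x b ≠ 0 → dα b = j := by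
  rw [WW, Finsupp.mem_supported]
  constructor
  · intro h b hb
    exact h (by simpa using hb)
  · intro h b hb
    exact h b (by simpa using hb)

theorem Graded.bar_mem {α β : Type} {dα : α → ℕ} {dβ : β → ℕ}
    {f : (α →₀ MvPolynomial σ k) →ₗ[MvPolynomial σ k] (β →₀ MvPolynomial σ k)}
    (hf : Graded dα dβ f) (j : ℕ) {x} (hx : x ∈ WW k dα j) : bar f x ∈ WW k dβ j := by
  classical
  rw [mem_WW] at hx ⊢
  have h1 : iot α x ∈ (HH dα {j} : Submodule k (α →₀ MvPolynomial σ k)) := by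
    intro c u hu
    rw [iot_apply, coeff_C] at hu
    split_ifs at hu with h
    · subst h; simpa using hx c hu
    · exact absurd rfl hu
  intro b hb
  have h2 := hf _ _ h1
  have h3 := h2 b 0
  rw [← eps_apply] at h3
  simpa using h3 hb

theorem finrank_WW {α : Type} [Finite α] (dα : α → ℕ) (j : ℕ) :
    Module.finrank k (WW k dα j) = Nat.card {b // dα b = j} := by
  classical
  have := Fintype.ofFinite α
  have e := (Finsupp.supportedEquivFinsupp (M := k) (R := k) {b | dα b = j})
  rw [WW, e.finrank_eq, Module.finrank_finsupp_self, ← Nat.card_eq_fintype_card]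
  rfl


/-- Graded free resolutions with arbitrary finite index types. -/
structure FR (I : Ideal (MvPolynomial σ k)) where
  ι : ℕ → Type
  fin : ∀ i, Finite (ι i)
  deg : ∀ i, ι i → ℕ
  aug : (ι 0 →₀ MvPolynomial σ k) →ₗ[MvPolynomial σ k] (Unit →₀ MvPolynomial σ k)
  d : ∀ i, (ι (i + 1) →₀ MvPolynomial σ k) →ₗ[MvPolynomial σ k] (ι i →₀ MvPolynomial σ k)
  aug_range : ∀ y, y ∈ LinearMap.range aug ↔ y () ∈ I
  exact_zero : ∀ x, x ∈ LinearMap.range (d 0) ↔ aug x = 0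
  exact_succ : ∀ i x, x ∈ LinearMap.range (d (i + 1)) ↔ d i x = 0
  aug_graded : Graded (deg 0) (fun _ => 0) aug
  d_graded : ∀ i, Graded (deg (i + 1)) (deg i) (d i)

theorem FR.aug_d {I : Ideal (MvPolynomial σ k)} (F : FR I) (x) : F.aug (F.d 0 x) = 0 :=
  (F.exact_zero _).1 ⟨x, rfl⟩

theorem FR.d_d {I : Ideal (MvPolynomial σ k)} (F : FR I) (i x) : F.d i (F.d (i + 1) x) = 0 :=
  (F.exact_succ _ _).1 ⟨x, rfl⟩

/-- Dependent choice along `ℕ`. -/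
theorem dep_choice {X : ℕ → Type} (G : ∀ n, X n → Prop) (R : ∀ n, X n → X (n + 1) → Prop)
    (x0 : X 0) (h0 : G 0 x0) (hs : ∀ n x, G n x → ∃ y, R n x y ∧ G (n + 1) y) :
    ∃ f : ∀ n, X n, f 0 = x0 ∧ (∀ n, G n (f n)) ∧ ∀ n, R n (f n) (f (n + 1)) := by
  choose s hs1 hs2 using hs
  let f : ∀ n, {x : X n // G n x} := fun n =>
    Nat.rec ⟨x0, h0⟩ (fun n x => ⟨s n x.1 x.2, hs2 n x.1 x.2⟩) n
  exact ⟨fun n => (f n).1, rfl, fun n => (f n).2, fun n => hs1 n _ (f n).2⟩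

theorem FR.exists_map {I : Ideal (MvPolynomial σ k)} (F G : FR I) :
    ∃ φ : ∀ n, (F.ι n →₀ MvPolynomial σ k) →ₗ[MvPolynomial σ k] (G.ι n →₀ MvPolynomial σ k),
      (∀ n, Graded (F.deg n) (G.deg n) (φ n)) ∧ (∀ x, G.aug (φ 0 x) = F.aug x) ∧
      ∀ n x, G.d n (φ (n + 1) x) = φ n (F.d n x) := by
  obtain ⟨φ0, h0, h0'⟩ := exists_lift G.aug_graded F.aug_graded (fun x => by
    rw [G.aug_range, ← F.aug_range]; exact ⟨x, rfl⟩)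
  obtain ⟨φ, e0, h1, h2⟩ := dep_choice
    (X := fun n => (F.ι n →₀ MvPolynomial σ k) →ₗ[MvPolynomial σ k] (G.ι n →₀ MvPolynomial σ k))
    (fun n φ => Graded (F.deg n) (G.deg n) φ ∧ ∀ x, φ (F.d n x) ∈ LinearMap.range (G.d n))
    (fun n φ ψ => ∀ x, G.d n (ψ x) = φ (F.d n x)) φ0
    ⟨h0, fun x => by
      rw [G.exact_zero, ← LinearMap.comp_apply, h0', F.aug_d]⟩
    (fun n φ hφ => by
      obtain ⟨ψ, hψ, hψ'⟩ := exists_lift (G.d_graded n) (hφ.1.comp (F.d_graded n)) hφ.2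
      have e : ∀ x, G.d n (ψ x) = φ (F.d n x) := fun x => LinearMap.congr_fun hψ' x
      exact ⟨ψ, e, hψ, fun x => by rw [G.exact_succ, e, F.d_d, map_zero]⟩)
  refine ⟨φ, fun n => (h1 n).1, fun x => ?_, h2⟩
  rw [e0]
  exact LinearMap.congr_fun h0' x

theorem FR.exists_homotopy {I : Ideal (MvPolynomial σ k)} (F : FR I)
    (χ : ∀ n, (F.ι n →₀ MvPolynomial σ k) →ₗ[MvPolynomial σ k] (F.ι n →₀ MvPolynomial σ k))
    (hχ : ∀ n, Graded (F.deg n) (F.deg n) (χ n)) (hχ0 : ∀ x, F.aug (χ 0 x) = 0)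
    (hχd : ∀ n x, F.d n (χ (n + 1) x) = χ n (F.d n x)) :
    ∃ h : ∀ n, (F.ι n →₀ MvPolynomial σ k) →ₗ[MvPolynomial σ k] (F.ι (n + 1) →₀ MvPolynomial σ k),
      (∀ n, Graded (F.deg n) (F.deg (n + 1)) (h n)) ∧ (∀ x, F.d 0 (h 0 x) = χ 0 x) ∧
      ∀ n x, F.d (n + 1) (h (n + 1) x) = χ (n + 1) x - h n (F.d n x) := by
  obtain ⟨η0, h0, h0'⟩ := exists_lift (F.d_graded 0) (hχ 0) (fun x => by
    rw [F.exact_zero, hχ0])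
  have h0'' : ∀ x, F.d 0 (η0 x) = χ 0 x := fun x => LinearMap.congr_fun h0' x
  obtain ⟨η, e0, h1, h2⟩ := dep_choice
    (X := fun n => (F.ι n →₀ MvPolynomial σ k) →ₗ[MvPolynomial σ k]
      (F.ι (n + 1) →₀ MvPolynomial σ k))
    (fun n φ => Graded (F.deg n) (F.deg (n + 1)) φ ∧
      ∀ x, F.d n (φ (F.d n x)) = χ n (F.d n x))
    (fun n φ ψ => ∀ x, F.d (n + 1) (ψ x) = χ (n + 1) x - φ (F.d n x)) η0
    ⟨h0, fun x => h0'' _⟩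
    (fun n φ hφ => by
      obtain ⟨ψ, hψ, hψ'⟩ := exists_lift (F.d_graded (n + 1))
        ((hχ (n + 1)).sub (hφ.1.comp (F.d_graded n))) (fun x => by
          rw [F.exact_succ]
          simp [hφ.2, hχd])
      have e : ∀ x, F.d (n + 1) (ψ x) = χ (n + 1) x - φ (F.d n x) :=
        fun x => LinearMap.congr_fun hψ' x
      exact ⟨ψ, e, hψ, fun x => by rw [e, F.d_d]; simp⟩)
  refine ⟨η, fun n => (h1 n).1, fun x => ?_, h2⟩
  rw [e0]
  exact h0'' x

/-- Dimension of a homology space. -/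
def hdim {U V W : Type} [AddCommGroup U] [Module k U] [AddCommGroup V] [Module k V]
    [AddCommGroup W] [Module k W]
    (o : V →ₗ[k] U) (i : W →ₗ[k] V) (J : Submodule k V) (J' : Submodule k W) : ℕ :=
  Module.finrank k ((↥(J ⊓ LinearMap.ker o)) ⧸
    ((J'.map i).submoduleOf (J ⊓ LinearMap.ker o)))

/-- Homology dimension of a resolution reduced modulo the irrelevant ideal. -/
def tdim {ι : ℕ → Type} (deg : ∀ i, ι i → ℕ) (D : ∀ i, (ι (i + 1) →₀ k) →ₗ[k] (ι i →₀ k)) :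
    ℕ → ℕ → ℕ
  | 0, j => hdim (0 : (ι 0 →₀ k) →ₗ[k] (ι 0 →₀ k)) (D 0) (WW k (deg 0) j) (WW k (deg 1) j)
  | i + 1, j => hdim (D i) (D (i + 1)) (WW k (deg (i + 1)) j) (WW k (deg (i + 2)) j)

theorem hdim_eq {U V W V' : Type} [AddCommGroup U] [Module k U] [AddCommGroup V] [Module k V]
    [AddCommGroup W] [Module k W] [AddCommGroup V'] [Module k V']
    (o : V →ₗ[k] U) (i : W →ₗ[k] V) (J : Submodule k V) (J' : Submodule k W)
    (K : Submodule k V') (f : V' →ₗ[k] V) (g : V →ₗ[k] V')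
    (hfJ : ∀ x ∈ K, f x ∈ J) (hfo : ∀ x ∈ K, o (f x) = 0)
    (hgJ : ∀ x ∈ J, g x ∈ K) (hgi : ∀ y ∈ J', g (i y) = 0)
    (hgf : ∀ x ∈ K, g (f x) = x)
    (hfg : ∀ x ∈ J, o x = 0 → ∃ y ∈ J', i y = f (g x) - x) :
    Module.finrank k K = hdim o i J J' := by
  let f' : K →ₗ[k] ↥(J ⊓ LinearMap.ker o) :=
    (f.domRestrict K).codRestrict _ (fun x => ⟨hfJ _ x.2, hfo _ x.2⟩)
  let q := (((J'.map i).submoduleOf (J ⊓ LinearMap.ker o)).mkQ) ∘ₗ f'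
  refine LinearEquiv.finrank_eq (LinearEquiv.ofBijective q ⟨?_, ?_⟩)
  · rw [injective_iff_map_eq_zero]
    intro x hx
    have hx' : f' x ∈ (J'.map i).submoduleOf (J ⊓ LinearMap.ker o) := by
      simpa [q] using hx
    obtain ⟨y, hy, hyx⟩ := hx'
    have hyx' : i y = f x := hyx
    have := hgf x x.2
    rw [← hyx', hgi y hy] at this
    exact Subtype.ext this.symm
  · intro z
    obtain ⟨z, rfl⟩ := Submodule.mkQ_surjective _ z
    refine ⟨⟨g z, hgJ _ z.2.1⟩, ?_⟩
    obtain ⟨y, hy, hyz⟩ := hfg z z.2.1 z.2.2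
    simp only [q, LinearMap.comp_apply]
    rw [← sub_eq_zero, ← map_sub, Submodule.mkQ_apply, Submodule.Quotient.mk_eq_zero]
    exact ⟨y, hy, hyz⟩

theorem FR.card_eq_tdim {I : Ideal (MvPolynomial σ k)} (F G : FR I) (i j : ℕ)
    (hin : ∀ x ∈ WW k (F.deg (i + 1)) j, bar (F.d i) x = 0)
    (hout : ∀ n, i = n + 1 → ∀ x ∈ WW k (F.deg (n + 1)) j, bar (F.d n) x = 0) :
    Nat.card {b // F.deg i b = j} = tdim G.deg (fun n => bar (G.d n)) i j := by
  have := F.fin i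
  rw [← finrank_WW (k := k)]
  obtain ⟨φ, hφ, hφ0, hφd⟩ := F.exists_map G
  obtain ⟨ψ, hψ, hψ0, hψd⟩ := G.exists_map F
  obtain ⟨h, hh, hh0, hhd⟩ := F.exists_homotopy (fun n => ψ n ∘ₗ φ n - LinearMap.id)
    (fun n => ((hψ n).comp (hφ n)).sub Graded.id) (fun x => by simp [hψ0, hφ0])
    (fun n x => by simp [hψd, hφd])
  obtain ⟨l, hl, hl0, hld⟩ := G.exists_homotopy (fun n => φ n ∘ₗ ψ n - LinearMap.id)
    (fun n => ((hφ n).comp (hψ n)).sub Graded.id) (fun x => by simp [hψ0, hφ0])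
    (fun n x => by simp [hψd, hφd])
  have bφ : ∀ n x, bar (G.d n) (bar (φ (n + 1)) x) = bar (φ n) (bar (F.d n) x) := fun n x => by
    rw [← bar_comp, ← bar_comp, LinearMap.ext (f := G.d n ∘ₗ φ (n + 1)) (g := φ n ∘ₗ F.d n) (hφd n)]
  have bψ : ∀ n x, bar (F.d n) (bar (ψ (n + 1)) x) = bar (ψ n) (bar (G.d n) x) := fun n x => by
    rw [← bar_comp, ← bar_comp, LinearMap.ext (f := F.d n ∘ₗ ψ (n + 1)) (g := ψ n ∘ₗ G.d n) (hψd n)]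
  have bh0 : ∀ x, bar (F.d 0) (bar (h 0) x) = bar (ψ 0) (bar (φ 0) x) - x := fun x => by
    rw [← bar_comp, ← bar_comp, LinearMap.ext (f := F.d 0 ∘ₗ h 0) hh0, bar_sub, bar_id]
  have bl0 : ∀ x, bar (G.d 0) (bar (l 0) x) = bar (φ 0) (bar (ψ 0) x) - x := fun x => by
    rw [← bar_comp, ← bar_comp, LinearMap.ext (f := G.d 0 ∘ₗ l 0) hl0, bar_sub, bar_id]
  have bh : ∀ n x, bar (F.d (n + 1)) (bar (h (n + 1)) x)
      = bar (ψ (n + 1)) (bar (φ (n + 1)) x) - x - bar (h n) (bar (F.d n) x) := fun n x => by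
    rw [← bar_comp, ← bar_comp, ← bar_comp,
      LinearMap.ext (f := F.d (n + 1) ∘ₗ h (n + 1))
        (g := (ψ (n + 1) ∘ₗ φ (n + 1) - LinearMap.id) - h n ∘ₗ F.d n) (hhd n),
      bar_sub, bar_sub, bar_id]
  have bl : ∀ n x, bar (G.d (n + 1)) (bar (l (n + 1)) x)
      = bar (φ (n + 1)) (bar (ψ (n + 1)) x) - x - bar (l n) (bar (G.d n) x) := fun n x => by
    rw [← bar_comp, ← bar_comp, ← bar_comp,
      LinearMap.ext (f := G.d (n + 1) ∘ₗ l (n + 1))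
        (g := (φ (n + 1) ∘ₗ ψ (n + 1) - LinearMap.id) - l n ∘ₗ G.d n) (hld n),
      bar_sub, bar_sub, bar_id]
  cases i with
  | zero =>
    refine hdim_eq (0 : (G.ι 0 →₀ k) →ₗ[k] (G.ι 0 →₀ k)) _ _ _ _ (bar (φ 0)) (bar (ψ 0)) (fun x hx => (hφ 0).bar_mem j hx)
      (fun _ _ => rfl) (fun x hx => (hψ 0).bar_mem j hx)
      (fun y hy => ?_) (fun x hx => ?_) (fun x hx _ => ?_)
    · rw [← bψ]; exact hin _ ((hψ 1).bar_mem j hy)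
    · have := bh0 x
      rw [hin _ ((hh 0).bar_mem j hx)] at this
      exact (sub_eq_zero.1 this.symm)
    · exact ⟨_, (hl 0).bar_mem j hx, bl0 x⟩
  | succ n =>
    refine hdim_eq _ _ _ _ _ (bar (φ (n + 1))) (bar (ψ (n + 1)))
      (fun x hx => (hφ _).bar_mem j hx)
      (fun x hx => ?_) (fun x hx => (hψ _).bar_mem j hx)
      (fun y hy => ?_) (fun x hx => ?_) (fun x hx hx0 => ?_)
    · rw [bφ, hout n rfl x hx, map_zero]
    · rw [← bψ]; exact hin _ ((hψ _).bar_mem j hy)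
    · have := bh n x
      rw [hin _ ((hh _).bar_mem j hx), hout n rfl x hx, map_zero, sub_zero] at this
      exact (sub_eq_zero.1 this.symm)
    · refine ⟨_, (hl _).bar_mem j hx, ?_⟩
      rw [bl, hx0, map_zero, sub_zero]


/-- Splitting off a rank one summand. -/
theorem split_lemma {α : Type} [Finite α] (dα : α → ℕ) (z : α)
    (l : (α →₀ MvPolynomial σ k) →ₗ[MvPolynomial σ k] MvPolynomial σ k)
    (w : α →₀ MvPolynomial σ k)
    (hc : ((∀ x, l x = x z) ∧ w z = 1) ∨ (w = Finsupp.single z 1 ∧ l w = 1))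
    (E : (α →₀ MvPolynomial σ k) →ₗ[MvPolynomial σ k] (α →₀ MvPolynomial σ k))
    (hE : ∀ x, E x = x - l x • w) (hEg : Graded dα dα E) :
    ∃ (β : Type) (_ : Finite β) (dβ : β → ℕ)
      (p : (α →₀ MvPolynomial σ k) →ₗ[MvPolynomial σ k] (β →₀ MvPolynomial σ k))
      (q : (β →₀ MvPolynomial σ k) →ₗ[MvPolynomial σ k] (α →₀ MvPolynomial σ k)),
      Graded dα dβ p ∧ Graded dβ dα q ∧ (∀ y, p (q y) = y) ∧ (∀ x, q (p x) = E x) ∧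
      Nat.card {b // dβ b = dα z} < Nat.card {b // dα b = dα z} := by
  classical
  let β := {x : α // x ≠ z}
  let inc : (β →₀ MvPolynomial σ k) →ₗ[MvPolynomial σ k] (α →₀ MvPolynomial σ k) :=
    Finsupp.lmapDomain _ _ Subtype.val
  let res : (α →₀ MvPolynomial σ k) →ₗ[MvPolynomial σ k] (β →₀ MvPolynomial σ k) :=
    Finsupp.lsubtypeDomain {x : α | x ≠ z}
  have inc_app : ∀ (y : β →₀ MvPolynomial σ k) (b : β), inc y b.1 = y b := fun y b =>
    Finsupp.mapDomain_apply Subtype.val_injective y b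
  have inc_z : ∀ (y : β →₀ MvPolynomial σ k), inc y z = 0 := fun y =>
    Finsupp.mapDomain_of_notMem_range y z (by rintro ⟨b, hb⟩; exact b.2 hb)
  have res_app : ∀ (x : α →₀ MvPolynomial σ k) (b : β), res x b = x b.1 := fun x b => rfl
  have res_inc : ∀ y, res (inc y) = y := fun y => by
    ext1 b; rw [res_app, inc_app]
  have inc_res : ∀ x, inc (res x) = x - x z • Finsupp.single z 1 := fun x => by
    ext1 a
    by_cases ha : a = z
    · subst ha; simp [inc_z]
    · have := inc_app (res x) ⟨a, ha⟩
      rw [this, res_app]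
      simp [Ne.symm ha]
  have res_z : res (Finsupp.single z 1) = 0 := by
    ext1 b
    rw [res_app, Finsupp.single_eq_of_ne b.2]; rfl
  let dβ : β → ℕ := fun b => dα b.1
  have ginc : Graded dβ dα inc := by
    intro p x hx a u hu
    by_cases ha : a = z
    · subst ha; rw [inc_z] at hu; simp at hu
    · have := inc_app x ⟨a, ha⟩
      rw [this] at hu
      exact hx ⟨a, ha⟩ u hu
  have gres : Graded dα dβ res := fun p x hx b u hu => hx b.1 u hu
  refine ⟨β, inferInstance, dβ, res ∘ₗ E, E ∘ₗ inc, gres.comp hEg, hEg.comp ginc, ?_, ?_, ?_⟩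
  · intro y
    simp only [LinearMap.comp_apply]
    rcases hc with ⟨h1, h2⟩ | ⟨h1, h2⟩
    · have : E (inc y) = inc y := by rw [hE, h1, inc_z, zero_smul, sub_zero]
      rw [this, this, res_inc]
    · rw [hE (E _), hE, h1, map_sub, map_sub, map_smul, map_smul, res_z, res_inc, smul_zero,
        smul_zero, sub_zero, sub_zero]
  · intro x
    simp only [LinearMap.comp_apply]
    rw [inc_res]
    rcases hc with ⟨h1, h2⟩ | ⟨h1, h2⟩
    · have : E x z = 0 := by simp [hE, h1, h2]
      rw [this, zero_smul, sub_zero, hE (E x), h1 (E x), this, zero_smul, sub_zero]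
    · have hz : E (Finsupp.single z 1) = 0 := by rw [← h1, hE, h2, one_smul, sub_self]
      rw [map_sub, map_smul, hz, smul_zero, sub_zero, hE x, map_sub, map_smul, h1, hz, smul_zero,
        sub_zero, ← h1, hE]
  · have := Fintype.ofFinite α
    rw [Nat.card_eq_fintype_card, Nat.card_eq_fintype_card]
    refine Fintype.card_lt_of_injective_not_surjective
      (fun b : {b : β // dβ b = dα z} => (⟨b.1.1, b.2⟩ : {b // dα b = dα z})) ?_ ?_
    · intro a b hab
      simp only [Subtype.mk.injEq] at hab
      exact Subtype.ext (Subtype.ext hab)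
    · intro hs
      obtain ⟨b, hb⟩ := hs ⟨z, rfl⟩
      exact b.1.2 (congrArg Subtype.val hb)

/-- A graded retract whose projector is a chain map is again a resolution. -/
def FR.retract {I : Ideal (MvPolynomial σ k)} (F : FR I) (κ : ℕ → Type) (hκ : ∀ i, Finite (κ i))
    (deg : ∀ i, κ i → ℕ)
    (p : ∀ i, (F.ι i →₀ MvPolynomial σ k) →ₗ[MvPolynomial σ k] (κ i →₀ MvPolynomial σ k))
    (q : ∀ i, (κ i →₀ MvPolynomial σ k) →ₗ[MvPolynomial σ k] (F.ι i →₀ MvPolynomial σ k))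
    (hp : ∀ i, Graded (F.deg i) (deg i) (p i)) (hq : ∀ i, Graded (deg i) (F.deg i) (q i))
    (hpq : ∀ i y, p i (q i y) = y) (haug : ∀ x, F.aug (q 0 (p 0 x)) = F.aug x)
    (hd : ∀ i x, F.d i (q (i + 1) (p (i + 1) x)) = q i (p i (F.d i x))) : FR I where
  ι := κ
  fin := hκ
  deg := deg
  aug := F.aug ∘ₗ q 0
  d := fun i => p i ∘ₗ F.d i ∘ₗ q (i + 1)
  aug_range := by
    intro y
    rw [← F.aug_range]
    constructor
    · rintro ⟨x, rfl⟩; exact ⟨_, rfl⟩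
    · rintro ⟨x, rfl⟩; exact ⟨p 0 x, haug x⟩
  exact_zero := by
    intro x
    simp only [LinearMap.comp_apply]
    constructor
    · rintro ⟨y, rfl⟩
      simp only [LinearMap.comp_apply]
      rw [← hd, F.aug_d]
    · intro h
      obtain ⟨y, hy⟩ := (F.exact_zero _).2 h
      refine ⟨p 1 y, ?_⟩
      simp only [LinearMap.comp_apply]
      rw [hd, hy, hpq, hpq]
  exact_succ := by
    intro i x
    simp only [LinearMap.comp_apply]
    constructor
    · rintro ⟨y, rfl⟩
      simp only [LinearMap.comp_apply]
      rw [← hd, F.d_d, map_zero]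
    · intro h
      have h' : F.d i (q (i + 1) x) = 0 := by
        have := hd i (q (i + 1) x)
        rw [hpq, h, map_zero] at this
        exact this
      obtain ⟨y, hy⟩ := (F.exact_succ _ _).2 h'
      refine ⟨p (i + 2) y, ?_⟩
      simp only [LinearMap.comp_apply]
      rw [hd, hy, hpq, hpq]
  aug_graded := F.aug_graded.comp (hq 0)
  d_graded := fun i => (hp i).comp ((F.d_graded i).comp (hq (i + 1)))

/-- The projector attached to a homotopy. -/
def FR.proj {I : Ideal (MvPolynomial σ k)} (F : FR I)
    (s : ∀ i, (F.ι i →₀ MvPolynomial σ k) →ₗ[MvPolynomial σ k]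
      (F.ι (i + 1) →₀ MvPolynomial σ k)) :
    ∀ i, (F.ι i →₀ MvPolynomial σ k) →ₗ[MvPolynomial σ k] (F.ι i →₀ MvPolynomial σ k)
  | 0 => LinearMap.id - F.d 0 ∘ₗ s 0
  | i + 1 => LinearMap.id - F.d (i + 1) ∘ₗ s (i + 1) - s i ∘ₗ F.d i

theorem FR.elim {I : Ideal (MvPolynomial σ k)} (F : FR I) (n : ℕ) (b : F.ι (n + 1)) (c : F.ι n)
    (u : k) (hu : u ≠ 0) (hdeg : F.deg (n + 1) b = F.deg n c)
    (hbc : F.d n (Finsupp.single b 1) c = C u) :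
    ∃ G : FR I, ∀ i, i = n ∨ i = n + 1 →
      Nat.card {a // G.deg i a = F.deg n c} < Nat.card {a // F.deg i a = F.deg n c} := by
  classical
  let sn : (F.ι n →₀ MvPolynomial σ k) →ₗ[MvPolynomial σ k] (F.ι (n + 1) →₀ MvPolynomial σ k) :=
    (Finsupp.lsingle b) ∘ₗ ((C u⁻¹ : MvPolynomial σ k) • (Finsupp.lapply c))
  have sn_app : ∀ x, sn x = Finsupp.single b (C u⁻¹ * x c) := fun x => rfl
  have gsn : Graded (F.deg n) (F.deg (n + 1)) sn := by
    refine graded_of_basis _ _ _ fun a => ?_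
    rw [sn_app, Finsupp.single_apply]
    split_ifs with h
    · subst h
      rw [← hdeg, mul_one]
      exact single_mem_HH _ _ _
    · simp
  let s : ∀ i, (F.ι i →₀ MvPolynomial σ k) →ₗ[MvPolynomial σ k]
      (F.ι (i + 1) →₀ MvPolynomial σ k) := Function.update (fun i => 0) n sn
  have s_n : s n = sn := Function.update_self _ _ _
  have s_ne : ∀ i, i ≠ n → s i = 0 := fun i hi => Function.update_of_ne hi _ _
  have gs : ∀ i, Graded (F.deg i) (F.deg (i + 1)) (s i) := by
    intro i
    by_cases h : i = n
    · subst h; rw [s_n]; exact gsn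
    · rw [s_ne i h]; exact Graded.zero
  have ge : ∀ i, Graded (F.deg i) (F.deg i) (F.proj s i) := by
    intro i
    cases i with
    | zero => exact Graded.id.sub ((F.d_graded 0).comp (gs 0))
    | succ i =>
      exact (Graded.id.sub ((F.d_graded (i + 1)).comp (gs (i + 1)))).sub
        ((gs i).comp (F.d_graded i))
  have key : ∀ i, ∃ (β : Type) (_ : Finite β) (dβ : β → ℕ)
      (p : (F.ι i →₀ MvPolynomial σ k) →ₗ[MvPolynomial σ k] (β →₀ MvPolynomial σ k))
      (q : (β →₀ MvPolynomial σ k) →ₗ[MvPolynomial σ k] (F.ι i →₀ MvPolynomial σ k)),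
      Graded (F.deg i) dβ p ∧ Graded dβ (F.deg i) q ∧ (∀ y, p (q y) = y) ∧
      (∀ x, q (p x) = F.proj s i x) ∧
      (i = n ∨ i = n + 1 →
        Nat.card {b // dβ b = F.deg n c} < Nat.card {b // F.deg i b = F.deg n c}) := by
    intro i
    have := F.fin i
    by_cases h1 : i = n
    · subst h1
      obtain ⟨β, h1, dβ, p, q, h2, h3, h4, h5, h6⟩ := split_lemma (F.deg i) c (Finsupp.lapply c)
        (F.d i (Finsupp.single b (C u⁻¹)))
        (Or.inl ⟨fun x => rfl, by
          have : Finsupp.single b (C u⁻¹) = (C u⁻¹ : MvPolynomial σ k) • Finsupp.single b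
            (1 : MvPolynomial σ k) := by simp
          rw [this, map_smul, Finsupp.smul_apply, hbc, smul_eq_mul, ← C_mul, inv_mul_cancel₀ hu,
            C_1]⟩)
        (F.proj s i) (fun x => by
          have e : sn x = x c • Finsupp.single b (C u⁻¹) := by
            rw [sn_app]; simp [mul_comm]
          have e2 : F.d i (sn x) = x c • F.d i (Finsupp.single b (C u⁻¹)) := by
            rw [e, map_smul]
          cases i with
          | zero => simp [FR.proj, s_n, e2]
          | succ i => simp [FR.proj, s_n, s_ne i (by omega), e2]) (ge i)
      exact ⟨β, h1, dβ, p, q, h2, h3, h4, h5, fun _ => h6⟩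
    · by_cases h2 : i = n + 1
      · subst h2
        obtain ⟨β, h1, dβ, p, q, h2, h3, h4, h5, h6⟩ := split_lemma (F.deg (n + 1)) b
          ((C u⁻¹ : MvPolynomial σ k) • (Finsupp.lapply c ∘ₗ F.d n))
          (Finsupp.single b 1)
          (Or.inr ⟨rfl, by
            change (C u⁻¹ : MvPolynomial σ k) * (F.d n (Finsupp.single b 1) c) = 1
            rw [hbc, ← C_mul, inv_mul_cancel₀ hu, C_1]⟩)
          (F.proj s (n + 1)) (fun x => by
            simp [FR.proj, s_n, s_ne (n + 1) (by omega), sn_app]) (ge (n + 1))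
        rw [hdeg] at h6
        exact ⟨β, h1, dβ, p, q, h2, h3, h4, h5, fun _ => h6⟩
      · refine ⟨F.ι i, F.fin i, F.deg i, LinearMap.id, LinearMap.id, Graded.id, Graded.id,
          fun _ => rfl, fun x => ?_, fun h => absurd h (by tauto)⟩
        cases i with
        | zero => simp [FR.proj, s_ne 0 h1]
        | succ i => simp [FR.proj, s_ne (i + 1) h1, s_ne i (by omega)]
  choose κ hκ dκ p q hp hq hpq hqp hcard using key
  refine ⟨F.retract κ hκ dκ p q hp hq hpq (fun x => ?_) (fun i x => ?_), hcard⟩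
  · rw [hqp]; simp [FR.proj, F.aug_d]
  · rw [hqp, hqp]
    cases i with
    | zero => simp [FR.proj, F.d_d]
    | succ i => simp [FR.proj, F.d_d]

theorem FR.exists_smaller {I : Ideal (MvPolynomial σ k)} (F : FR I) (n j : ℕ)
    (x : F.ι (n + 1) →₀ k) (hx : x ∈ WW k (F.deg (n + 1)) j) (hne : bar (F.d n) x ≠ 0) :
    ∃ G : FR I, ∀ i, i = n ∨ i = n + 1 →
      Nat.card {a // G.deg i a = j} < Nat.card {a // F.deg i a = j} := by
  classical
  rw [mem_WW] at hx
  have h1 : ∃ b, F.deg (n + 1) b = j ∧ bar (F.d n) (Finsupp.single b 1) ≠ 0 := by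
    by_contra hcon
    push Not at hcon
    apply hne
    rw [← Finsupp.sum_single x, Finsupp.sum, map_sum]
    refine Finset.sum_eq_zero fun b hb => ?_
    have : Finsupp.single b (x b) = x b • Finsupp.single b (1 : k) := by simp
    rw [this, map_smul, hcon b (hx b (Finsupp.mem_support_iff.1 hb)), smul_zero]
  obtain ⟨b, hb, hb'⟩ := h1
  obtain ⟨c, hc⟩ := Finsupp.ne_iff.1 hb'
  have e : bar (F.d n) (Finsupp.single b 1) c = coeff 0 (F.d n (Finsupp.single b 1) c) := by
    simp only [bar, LinearMap.comp_apply, eps_apply, iot_single, C_1]; rfl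
  rw [e, Finsupp.zero_apply] at hc
  have hg := F.d_graded n _ _ (by simpa using single_mem_HH (F.deg (n + 1)) b (1 : k)) c
  have hcb : F.deg n c = F.deg (n + 1) b := by simpa using hg 0 hc
  have := F.elim n b c _ hc hcb.symm (by
    ext u
    rw [coeff_C]
    split_ifs with h
    · rw [h]
    · by_contra h'
      have := hg u h'
      simp only [Set.mem_singleton_iff] at this
      exact h ((Finsupp.degree_eq_zero_iff u).1 (by omega)).symm)
  rwa [hcb, hb] at this


theorem HH_of_isHomogeneous {ι : Type} (deg : ι → ℕ) (p : ℕ) (x : ι →₀ MvPolynomial σ k)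
    (h : ∀ c, x c = 0 ∨ ∃ m, p = deg c + m ∧ (x c).IsHomogeneous m) : x ∈ HH deg {p} := by
  intro c u hu
  rcases h c with h | ⟨m, hm, h⟩
  · simp [h] at hu
  · have := h hu
    have hw : u.degree = Finsupp.weight 1 u := DFunLike.congr_fun Finsupp.degree_eq_weight_one u
    rw [← hw] at this
    simp only [Set.mem_singleton_iff]
    omega

theorem isHomogeneous_of_HH {ι : Type} (deg : ι → ℕ) (p : ℕ) (x : ι →₀ MvPolynomial σ k)
    (h : x ∈ HH deg {p}) (c : ι) : x c = 0 ∨ ∃ m, p = deg c + m ∧ (x c).IsHomogeneous m := by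
  by_cases h0 : x c = 0
  · exact Or.inl h0
  · right
    obtain ⟨u, hu⟩ := MvPolynomial.ne_zero_iff.1 h0
    refine ⟨u.degree, (h c u hu).symm, fun v hv => ?_⟩
    have h1 : deg c + u.degree = p := h c u hu
    have h2 : deg c + v.degree = p := h c v hv
    have hw : v.degree = Finsupp.weight 1 v := DFunLike.congr_fun Finsupp.degree_eq_weight_one v
    rw [← hw]
    omega

/-- From the frozen notion of resolution to the auxiliary one. -/
def FR.ofGFR {I : Ideal (MvPolynomial σ k)} (F : GradedFreeRes k σ I) : FR I where
  ι := fun i => Fin (F.rk i)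
  fin := fun _ => inferInstance
  deg := F.deg
  aug := Finsupp.lsingle () ∘ₗ F.aug
  d := F.d
  aug_range := by
    intro y
    have hI : y () ∈ I ↔ y () ∈ LinearMap.range F.aug := by
      have := F.aug_range
      exact ⟨fun h => this.symm ▸ h, fun h => this ▸ h⟩
    rw [hI]
    constructor
    · rintro ⟨x, rfl⟩
      exact ⟨x, by simp⟩
    · rintro ⟨x, hx⟩
      refine ⟨x, ?_⟩
      refine Finsupp.ext fun a => ?_
      simpa using hx
  exact_zero := by
    intro x
    rw [F.exact_zero]
    simp
  exact_succ := by
    intro i x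
    rw [F.exact_succ, LinearMap.mem_ker]
  aug_graded := by
    refine graded_of_basis _ _ _ fun b => HH_of_isHomogeneous _ _ _ fun c => Or.inr ?_
    exact ⟨F.deg 0 b, by simp, by simpa using F.aug_graded b⟩
  d_graded := fun i => graded_of_basis _ _ _ fun b => HH_of_isHomogeneous _ _ _ (F.d_graded i b)

theorem FR.toGFR {I : Ideal (MvPolynomial σ k)} (F : FR I) :
    ∃ G : GradedFreeRes k σ I, ∀ i j,
      (Finset.univ.filter (fun b => G.deg i b = j)).card = Nat.card {b // F.deg i b = j} := by
  classical
  have := F.fin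
  let e : ∀ i, F.ι i ≃ Fin (Nat.card (F.ι i)) := fun i => Finite.equivFin (F.ι i)
  let E : ∀ i, (F.ι i →₀ MvPolynomial σ k) ≃ₗ[MvPolynomial σ k]
    (Fin (Nat.card (F.ι i)) →₀ MvPolynomial σ k) := fun i => Finsupp.domLCongr (e i)
  refine ⟨{
    rk := fun i => Nat.card (F.ι i)
    deg := fun i b => F.deg i ((e i).symm b)
    aug := Finsupp.lapply () ∘ₗ F.aug ∘ₗ (E 0).symm.toLinearMap
    d := fun i => (E i).toLinearMap ∘ₗ F.d i ∘ₗ (E (i + 1)).symm.toLinearMap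
    aug_range := ?_
    exact_zero := ?_
    exact_succ := ?_
    aug_graded := ?_
    d_graded := ?_ }, ?_⟩
  · ext y
    constructor
    · rintro ⟨x, rfl⟩
      exact (F.aug_range _).1 ⟨_, rfl⟩
    · intro hy
      obtain ⟨x, hx⟩ := (F.aug_range (Finsupp.single () y)).2 (by simpa using hy)
      exact ⟨E 0 x, by simp [hx]⟩
  · ext x
    rw [LinearMap.mem_ker]
    have h := F.exact_zero ((E 0).symm x)
    have h1 : F.aug ((E 0).symm x) = 0 ↔ F.aug ((E 0).symm x) () = 0 := by
      constructor
      · intro h; rw [h]; rfl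
      · intro h; refine Finsupp.ext fun a => ?_; exact h
    simp only [LinearMap.comp_apply, LinearEquiv.coe_coe, Finsupp.lapply_apply]
    rw [← h1, ← h]
    constructor
    · rintro ⟨y, rfl⟩
      exact ⟨(E 1).symm y, by simp⟩
    · rintro ⟨y, hy⟩
      exact ⟨E 1 y, by simp [hy]⟩
  · intro i
    ext x
    rw [LinearMap.mem_ker]
    have h := F.exact_succ i ((E (i + 1)).symm x)
    simp only [LinearMap.comp_apply, LinearEquiv.coe_coe, LinearEquiv.map_eq_zero_iff]
    rw [← h]
    constructor
    · rintro ⟨y, rfl⟩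
      exact ⟨(E (i + 2)).symm y, by simp⟩
    · rintro ⟨y, hy⟩
      exact ⟨E (i + 2) y, by simp [hy]⟩
  · intro b
    have h1 : (E 0).symm (Finsupp.single b (1 : MvPolynomial σ k))
        = Finsupp.single ((e 0).symm b) 1 := by
      simp [E, Finsupp.domLCongr_symm]
    simp only [LinearMap.comp_apply, LinearEquiv.coe_coe, Finsupp.lapply_apply, h1]
    have h2 := F.aug_graded _ _
      (by simpa using single_mem_HH (F.deg 0) ((e 0).symm b) (1 : k))
    rcases isHomogeneous_of_HH _ _ _ h2 () with h | ⟨m, hm, h⟩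
    · rw [h]; exact isHomogeneous_zero _ _ _
    · rw [zero_add] at hm; rw [hm]; exact h
  · intro i b c
    have h1 : (E (i + 1)).symm (Finsupp.single b (1 : MvPolynomial σ k))
        = Finsupp.single ((e (i + 1)).symm b) 1 := by
      simp [E, Finsupp.domLCongr_symm]
    have h3 : ∀ x, E i x c = x ((e i).symm c) := fun x => by
      simp [E, Finsupp.domLCongr_apply]
    simp only [LinearMap.comp_apply, LinearEquiv.coe_coe, h1, h3]
    have h2 := F.d_graded i _ _
      (by simpa using single_mem_HH (F.deg (i + 1)) ((e (i + 1)).symm b) (1 : k))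
    exact isHomogeneous_of_HH _ _ _ h2 _
  · intro i j
    rw [← Fintype.card_subtype, ← Nat.card_eq_fintype_card]
    exact Nat.card_congr ((e i).symm.subtypeEquiv (fun a => Iff.rfl))

theorem betti_eq_tdim {I : Ideal (MvPolynomial σ k)} (T : FR I) (i j : ℕ) :
    betti k σ I i j = tdim T.deg (fun n => bar (T.d n)) i j := by
  obtain ⟨T', -⟩ := T.toGFR
  obtain ⟨F, hF⟩ := Nat.sInf_mem (s := { r | ∃ F : GradedFreeRes k σ I,
    r = (Finset.univ.filter (fun b => F.deg i b = j)).card }) ⟨_, T', rfl⟩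
  change betti k σ I i j = _ at hF
  have hcard : betti k σ I i j = Nat.card {b // (FR.ofGFR F).deg i b = j} := by
    rw [hF, ← Fintype.card_subtype, ← Nat.card_eq_fintype_card]; rfl
  have hmin : ∀ G : FR I, ¬ Nat.card {a // G.deg i a = j} <
      Nat.card {a // (FR.ofGFR F).deg i a = j} := by
    intro G hG
    obtain ⟨G', hG'⟩ := G.toGFR
    rw [← hcard, ← hG'] at hG
    exact Nat.notMem_of_lt_sInf hG ⟨G', rfl⟩
  rw [hcard]
  apply FR.card_eq_tdim
  · intro x hx
    by_contra hne
    obtain ⟨G, hG⟩ := FR.exists_smaller _ i j x hx hne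
    exact hmin G (hG i (Or.inl rfl))
  · rintro n rfl x hx
    by_contra hne
    obtain ⟨G, hG⟩ := FR.exists_smaller _ n j x hx hne
    exact hmin G (hG _ (Or.inr rfl))


/-- Prepending a vertex. -/
def cn (R : Type) [CommRing R] {α : Type} {i : ℕ} (c : α) :
    ((Fin i → α) →₀ R) →ₗ[R] ((Fin (i + 1) → α) →₀ R) :=
  Finsupp.lmapDomain R R (fun τ => (Fin.cons c τ : Fin (i + 1) → α))

theorem cn_single {R : Type} [CommRing R] {α : Type} {i : ℕ} (c : α) (τ : Fin i → α) (a : R) :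
    cn R c (Finsupp.single τ a) = Finsupp.single (Fin.cons c τ : Fin (i + 1) → α) a := by
  simp [cn]

/-- The boundary map of the full complex of tuples. -/
def DD (k : Type) [Field k] (α : Type) :
    ∀ i, ((Fin (i + 1) → α) →₀ k) →ₗ[k] ((Fin i → α) →₀ k)
  | 0 => Finsupp.linearCombination k (fun τ => Finsupp.single (Fin.tail τ) 1)
  | i + 1 => Finsupp.linearCombination k (fun τ =>
      Finsupp.single (Fin.tail τ) 1 - cn k (τ 0) (DD k α i (Finsupp.single (Fin.tail τ) 1)))

theorem DD_zero_cn {α : Type} (c : α) (y : (Fin 0 → α) →₀ k) : DD k α 0 (cn k c y) = y := by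
  induction y using Finsupp.induction_linear with
  | zero => simp
  | add x y hx hy => simp [hx, hy]
  | single τ a => rw [cn_single]; simp [DD]

theorem DD_succ_cn {α : Type} (c : α) (i : ℕ) (y : (Fin (i + 1) → α) →₀ k) :
    DD k α (i + 1) (cn k c y) = y - cn k c (DD k α i y) := by
  induction y using Finsupp.induction_linear with
  | zero => simp
  | add x y hx hy => simp only [map_add, hx, hy]; abel
  | single τ a =>
    have h : Finsupp.single τ a = a • Finsupp.single τ (1 : k) := by simp
    rw [h]
    simp only [map_smul]
    rw [cn_single]
    simp [DD, smul_sub]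

theorem DD_DD {α : Type} (i : ℕ) (y : (Fin (i + 2) → α) →₀ k) :
    DD k α i (DD k α (i + 1) y) = 0 := by
  induction i with
  | zero =>
    induction y using Finsupp.induction_linear with
    | zero => simp
    | add x y hx hy => simp [hx, hy]
    | single τ a =>
      rw [← Fin.cons_self_tail τ, ← cn_single, DD_succ_cn, map_sub, DD_zero_cn, sub_self]
  | succ i ih =>
    induction y using Finsupp.induction_linear with
    | zero => simp
    | add x y hx hy => simp [hx, hy]
    | single τ a =>
      rw [← Fin.cons_self_tail τ, ← cn_single, DD_succ_cn, map_sub, DD_succ_cn, ih]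
      simp

theorem DD_range {α : Type} (i : ℕ) (τ : Fin (i + 1) → α) (ρ : Fin i → α)
    (h : DD k α i (Finsupp.single τ 1) ρ ≠ 0) : ∀ t, ∃ t', ρ t = τ t' := by
  classical
  induction i with
  | zero => intro t; exact t.elim0
  | succ i ih =>
    simp only [DD, Finsupp.linearCombination_single, one_smul, Finsupp.sub_apply] at h
    by_cases h1 : Fin.tail τ = ρ
    · subst h1
      intro t
      exact ⟨t.succ, rfl⟩
    · rw [Finsupp.single_eq_of_ne (Ne.symm h1), zero_sub, neg_ne_zero] at h
      have h2 : ρ ∈ Set.range (fun τ' => (Fin.cons (τ 0) τ' : Fin (i + 1) → α)) := by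
        by_contra hcon
        exact h (Finsupp.mapDomain_of_notMem_range _ _ hcon)
      obtain ⟨ρ', rfl⟩ := h2
      have hinj : Function.Injective (fun τ' => (Fin.cons (τ 0) τ' : Fin (i + 1) → α)) :=
        Fin.cons_right_injective (α := fun _ => α) (τ 0)
      have h3 := ih (Fin.tail τ) ρ' (by
        rw [cn, Finsupp.lmapDomain_apply,
          Finsupp.mapDomain_apply hinj] at h
        exact h)
      intro t
      refine Fin.cases ?_ (fun t => ?_) t
      · exact ⟨0, rfl⟩
      · obtain ⟨t', ht'⟩ := h3 t
        exact ⟨t'.succ, by simpa [Fin.tail] using ht'⟩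

/-- The label (least common multiple) of a tuple of exponents. -/
def LL {α : Type} (g : α → σ →₀ ℕ) {i : ℕ} (τ : Fin i → α) : σ →₀ ℕ :=
  Finset.univ.sup (fun t => g (τ t))

theorem LL_le {α : Type} (g : α → σ →₀ ℕ) {i : ℕ} (τ : Fin i → α) (u : σ →₀ ℕ) :
    LL g τ ≤ u ↔ ∀ t, g (τ t) ≤ u := by
  simp [LL]

theorem LL_le_of_DD {α : Type} (g : α → σ →₀ ℕ) (i : ℕ) (τ : Fin (i + 1) → α) (ρ : Fin i → α)
    (h : DD k α i (Finsupp.single τ 1) ρ ≠ 0) : LL g ρ ≤ LL g τ := by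
  rw [LL_le]
  intro t
  obtain ⟨t', ht'⟩ := DD_range i τ ρ h t
  rw [ht']
  exact (LL_le g τ _).1 le_rfl t'

/-- Homogenization of a constant vector. -/
def hm {α : Type} (g : α → σ →₀ ℕ) {i : ℕ} (u : σ →₀ ℕ) (y : (Fin i → α) →₀ k) :
    (Fin i → α) →₀ MvPolynomial σ k :=
  Finsupp.onFinset y.support (fun ρ => monomial (u - LL g ρ) (y ρ)) (fun ρ h => by
    rw [Finsupp.mem_support_iff]
    intro h0
    simp [h0] at h)

theorem hm_apply {α : Type} (g : α → σ →₀ ℕ) {i : ℕ} (u : σ →₀ ℕ) (y : (Fin i → α) →₀ k)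
    (ρ : Fin i → α) : hm g u y ρ = monomial (u - LL g ρ) (y ρ) := rfl

/-- Dehomogenization. -/
def MM (k : Type) [Field k] {α : Type} (g : α → σ →₀ ℕ) (i : ℕ) :
    ((Fin i → α) →₀ MvPolynomial σ k) →ₗ[MvPolynomial σ k] ((Fin i → α) →₀ MvPolynomial σ k) :=
  Finsupp.linearCombination _ (fun τ => Finsupp.single τ (monomial (LL g τ) 1))

theorem MM_apply {α : Type} (g : α → σ →₀ ℕ) (i : ℕ) (x : (Fin i → α) →₀ MvPolynomial σ k)
    (τ : Fin i → α) : MM k g i x τ = x τ * monomial (LL g τ) 1 := by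
  classical
  induction x using Finsupp.induction_linear with
  | zero => simp
  | add x y hx hy => simp [hx, hy, add_mul]
  | single ρ s =>
    simp only [MM, Finsupp.linearCombination_single, Finsupp.smul_apply, smul_eq_mul,
      Finsupp.single_apply]
    split_ifs with h
    · subst h; rfl
    · simp

theorem MM_inj {α : Type} (g : α → σ →₀ ℕ) (i : ℕ) : Function.Injective (MM k g i) := by
  intro x y h
  refine Finsupp.ext fun τ => ?_
  have := DFunLike.congr_fun h τ
  rw [MM_apply, MM_apply] at this
  exact mul_right_cancel₀ (by simp) this

theorem MM_hm {α : Type} (g : α → σ →₀ ℕ) (i : ℕ) (u : σ →₀ ℕ) (y : (Fin i → α) →₀ k)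
    (h : ∀ τ, y τ ≠ 0 → LL g τ ≤ u) :
    MM k g i (hm g u y) = (monomial u 1 : MvPolynomial σ k) • iot _ y := by
  refine Finsupp.ext fun τ => ?_
  rw [MM_apply, hm_apply, Finsupp.smul_apply, iot_apply, monomial_mul, smul_eq_mul, mul_comm _ (C _),
    C_mul_monomial]
  by_cases h0 : y τ = 0
  · simp [h0]
  · rw [tsub_add_cancel_of_le (h τ h0)]

/-- The differential of the Taylor-type complex. -/
def TT (k : Type) [Field k] {α : Type} (g : α → σ →₀ ℕ) (i : ℕ) :
    ((Fin (i + 1) → α) →₀ MvPolynomial σ k) →ₗ[MvPolynomial σ k]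
      ((Fin i → α) →₀ MvPolynomial σ k) :=
  Finsupp.linearCombination _ (fun τ => hm g (LL g τ) (DD k α i (Finsupp.single τ 1)))

/-- Base change of the boundary map. -/
def DS (k : Type) [Field k] (σ : Type) (α : Type) (i : ℕ) :
    ((Fin (i + 1) → α) →₀ MvPolynomial σ k) →ₗ[MvPolynomial σ k]
      ((Fin i → α) →₀ MvPolynomial σ k) :=
  Finsupp.linearCombination _ (fun τ => iot _ (DD k α i (Finsupp.single τ 1)))

theorem iot_smul {ι : Type} (a : k) (x : ι →₀ k) :
    (iot ι (a • x) : ι →₀ MvPolynomial σ k) = (C a : MvPolynomial σ k) • iot ι x := by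
  refine Finsupp.ext fun c => ?_
  rw [iot_apply, Finsupp.smul_apply, Finsupp.smul_apply, iot_apply, smul_eq_mul, smul_eq_mul, C_mul]

theorem DS_iot {α : Type} (i : ℕ) (y : (Fin (i + 1) → α) →₀ k) :
    DS k σ α i (iot _ y) = iot _ (DD k α i y) := by
  induction y using Finsupp.induction_linear with
  | zero => simp
  | add x y hx hy => simp only [map_add, hx, hy]
  | single τ a =>
    have h : Finsupp.single τ a = a • Finsupp.single τ (1 : k) := by simp
    rw [iot_single, h, map_smul, iot_smul]
    simp [DS]

theorem MM_TT {α : Type} (g : α → σ →₀ ℕ) (i : ℕ) (x) :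
    MM k g i (TT k g i x) = DS k σ α i (MM k g (i + 1) x) := by
  have : MM k g i ∘ₗ TT k g i = DS k σ α i ∘ₗ MM k g (i + 1) := by
    apply Finsupp.lhom_ext'
    intro τ
    apply LinearMap.ext_ring
    simp only [LinearMap.comp_apply, Finsupp.lsingle_apply]
    rw [TT, Finsupp.linearCombination_single, one_smul,
      MM_hm g i _ _ (fun ρ hρ => LL_le_of_DD g i τ ρ hρ)]
    simp [MM, DS]
  exact LinearMap.congr_fun this x

/-- Extraction of the coefficient of a monomial. -/
def xi (u : σ →₀ ℕ) (ι : Type) : (ι →₀ MvPolynomial σ k) →ₗ[k] (ι →₀ k) :=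
  Finsupp.mapRange.linearMap (lcoeff k u)

theorem xi_apply (u : σ →₀ ℕ) {ι : Type} (x : ι →₀ MvPolynomial σ k) (c : ι) :
    xi u ι x c = coeff u (x c) := rfl

theorem sum_xi {ι : Type} (x : ι →₀ MvPolynomial σ k) :
    ∃ U : Finset (σ →₀ ℕ), x = ∑ u ∈ U, (monomial u 1 : MvPolynomial σ k) • iot ι (xi u ι x) := by
  classical
  refine ⟨x.support.biUnion fun c => (x c).support, ?_⟩
  refine Finsupp.ext fun c => ?_
  rw [Finsupp.finsetSum_apply]
  ext v
  rw [coeff_sum]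
  simp only [Finsupp.smul_apply, iot_apply, smul_eq_mul, xi_apply, mul_comm _ (C _),
    C_mul_monomial, mul_one, coeff_monomial, Finset.sum_ite_eq']
  split_ifs with h
  · rfl
  · by_contra h'
    apply h
    rw [Finset.mem_biUnion]
    refine ⟨c, ?_, by simpa using h'⟩
    rw [Finsupp.mem_support_iff]
    intro h0
    simp [h0] at h'

theorem xi_DS {α : Type} (u : σ →₀ ℕ) (i : ℕ) (x : (Fin (i + 1) → α) →₀ MvPolynomial σ k) :
    xi u _ (DS k σ α i x) = DD k α i (xi u _ x) := by
  induction x using Finsupp.induction_linear with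
  | zero => simp
  | add x y hx hy => simp only [map_add, hx, hy]
  | single τ s =>
    have h : xi u _ (Finsupp.single τ s) = coeff u s • Finsupp.single τ (1 : k) := by
      simp [xi]
    rw [h, map_smul]
    refine Finsupp.ext fun ρ => ?_
    simp [DS, xi_apply, iot_apply, mul_comm s]
    ring

theorem TT_TT {α : Type} (g : α → σ →₀ ℕ) (i : ℕ) (x) : TT k g i (TT k g (i + 1) x) = 0 := by
  apply MM_inj g i
  rw [MM_TT, MM_TT, map_zero]
  generalize MM k g (i + 1 + 1) x = y
  obtain ⟨U, hU⟩ := sum_xi (DS k σ α i (DS k σ α (i + 1) y))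
  rw [hU]
  refine Finset.sum_eq_zero fun u _ => ?_
  rw [xi_DS, xi_DS, DD_DD]
  simp

theorem TT_exact {α : Type} (g : α → σ →₀ ℕ) (i : ℕ) (z) (hz : TT k g i z = 0) :
    ∃ x, TT k g (i + 1) x = z := by
  have key : ∀ u, ∃ w, MM k g (i + 1) (TT k g (i + 1) w) =
      (monomial u 1 : MvPolynomial σ k) • iot _ (xi u _ (MM k g (i + 1) z)) := by
    intro u
    have hL : ∀ τ, xi u _ (MM k g (i + 1) z) τ ≠ 0 → LL g τ ≤ u := by
      intro τ hτ
      rw [xi_apply, MM_apply, coeff_mul_monomial'] at hτ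
      by_contra h
      rw [if_neg h] at hτ
      exact hτ rfl
    have hD : DD k α i (xi u _ (MM k g (i + 1) z)) = 0 := by
      rw [← xi_DS, ← MM_TT, hz]; simp
    generalize xi u _ (MM k g (i + 1) z) = y at hL hD ⊢
    by_cases hy : y = 0
    · exact ⟨0, by simp [hy]⟩
    · obtain ⟨τ, hτ⟩ := Finsupp.ne_iff.1 hy
      have hc := (LL_le g τ u).1 (hL τ hτ) 0
      refine ⟨hm g u (cn k (τ 0) y), ?_⟩
      rw [MM_TT, MM_hm, map_smul, DS_iot, DD_succ_cn, hD, map_zero, sub_zero]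
      intro ρ hρ
      have h2 : ρ ∈ Set.range (fun τ' => (Fin.cons (τ 0) τ' : Fin (i + 1 + 1) → α)) := by
        by_contra hcon
        exact hρ (Finsupp.mapDomain_of_notMem_range _ _ hcon)
      obtain ⟨ρ', rfl⟩ := h2
      have hinj : Function.Injective (fun τ' => (Fin.cons (τ 0) τ' : Fin (i + 1 + 1) → α)) :=
        Fin.cons_right_injective (α := fun _ => α) (τ 0)
      rw [cn, Finsupp.lmapDomain_apply, Finsupp.mapDomain_apply hinj] at hρ
      have h3 := (LL_le g ρ' u).1 (hL ρ' hρ)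
      rw [LL_le]
      intro t
      refine Fin.cases ?_ (fun t => ?_) t
      · exact hc
      · exact h3 t
  choose w hw using key
  obtain ⟨U, hU⟩ := sum_xi (MM k g (i + 1) z)
  refine ⟨∑ u ∈ U, w u, MM_inj g _ ?_⟩
  rw [map_sum, map_sum, hU]
  exact Finset.sum_congr rfl fun u _ => hw u

theorem TT_graded {α : Type} (g : α → σ →₀ ℕ) (i : ℕ) :
    Graded (fun τ : Fin (i + 1) → α => (LL g τ).degree) (fun τ : Fin i → α => (LL g τ).degree)
      (TT k g i) := by
  classical
  refine graded_of_basis _ _ _ fun τ ρ u hu => ?_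
  rw [TT, Finsupp.linearCombination_single, one_smul, hm_apply, coeff_monomial] at hu
  split_ifs at hu with h
  · have h1 := LL_le_of_DD g i τ ρ hu
    rw [Set.mem_singleton_iff, ← h, ← map_add, add_tsub_cancel_of_le h1]
  · exact absurd rfl hu

/-- The reduction of the Taylor-type differential, in terms of degrees only. -/
def BB (k : Type) [Field k] {α : Type} (δ : ∀ i, (Fin i → α) → ℕ) (i : ℕ) :
    ((Fin (i + 1) → α) →₀ k) →ₗ[k] ((Fin i → α) →₀ k) :=
  Finsupp.linearCombination k (fun τ =>
    (DD k α i (Finsupp.single τ 1)).filter (fun ρ => δ (i + 1) τ = δ i ρ))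

theorem bar_TT {α : Type} (g : α → σ →₀ ℕ) (i : ℕ) :
    bar (TT k g i) = BB k (fun _ τ => (LL g τ).degree) i := by
  classical
  apply Finsupp.lhom_ext'
  intro τ
  apply LinearMap.ext_ring
  refine Finsupp.ext fun ρ => ?_
  have e : bar (TT k g i) (Finsupp.single τ 1) ρ = coeff 0 (TT k g i (Finsupp.single τ 1) ρ) := by
    simp only [bar, LinearMap.comp_apply, eps_apply, iot_single, C_1]; rfl
  simp only [LinearMap.comp_apply, Finsupp.lsingle_apply]
  rw [e, TT, Finsupp.linearCombination_single, one_smul, hm_apply, coeff_monomial, BB,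
    Finsupp.linearCombination_single, one_smul, Finsupp.filter_apply]
  by_cases h : DD k α i (Finsupp.single τ 1) ρ = 0
  · simp [h]
  · have h1 := LL_le_of_DD g i τ ρ h
    refine if_congr ?_ rfl rfl
    rw [← Finsupp.degree_eq_zero_iff]
    have := congrArg Finsupp.degree (add_tsub_cancel_of_le h1)
    rw [map_add] at this
    omega

theorem TT_zero_apply {α : Type} (g : α → σ →₀ ℕ) (x : (Fin 1 → α) →₀ MvPolynomial σ k)
    (ρ : Fin 0 → α) : TT k g 0 x ρ =
      Finsupp.linearCombination (MvPolynomial σ k)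
        (fun τ : Fin 1 → α => (monomial (g (τ 0)) 1 : MvPolynomial σ k)) x := by
  induction x using Finsupp.induction_linear with
  | zero => simp
  | add x y hx hy => simp [hx, hy]
  | single τ s =>
    have e : LL g τ = g (τ 0) := by simp [LL]
    have e2 : LL g ρ = 0 := by simp [LL]; rfl
    have e3 : Fin.tail τ = ρ := Subsingleton.elim _ _
    simp [TT, hm_apply, DD, e, e2, e3]

/-- The Taylor-type resolution. -/
def TFR {α : Type} [Finite α] (g : α → σ →₀ ℕ) :
    FR (Ideal.span (Set.range fun a => (monomial (g a) 1 : MvPolynomial σ k))) where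
  ι := fun i => Fin (i + 1) → α
  fin := fun _ => inferInstance
  deg := fun i τ => (LL g τ).degree
  aug := (Finsupp.domLCongr (Equiv.ofUnique (Fin 0 → α) Unit)).toLinearMap ∘ₗ TT k g 0
  d := fun i => TT k g (i + 1)
  aug_range := by
    intro y
    have e : ∀ x, ((Finsupp.domLCongr (Equiv.ofUnique (Fin 0 → α) Unit)).toLinearMap ∘ₗ TT k g 0) x
        () = Finsupp.linearCombination (MvPolynomial σ k)
        (fun τ : Fin 1 → α => (monomial (g (τ 0)) 1 : MvPolynomial σ k)) x := by
      intro x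
      rw [← TT_zero_apply g x default]
      simp [Finsupp.domLCongr_apply]
    have hr : (Set.range fun a => (monomial (g a) 1 : MvPolynomial σ k)) =
        Set.range (fun τ : Fin 1 → α => (monomial (g (τ 0)) 1 : MvPolynomial σ k)) := by
      ext p
      constructor
      · rintro ⟨a, rfl⟩; exact ⟨fun _ => a, rfl⟩
      · rintro ⟨a, rfl⟩; exact ⟨a 0, rfl⟩
    rw [hr, Ideal.span, ← Finsupp.range_linearCombination]
    constructor
    · rintro ⟨x, rfl⟩
      exact ⟨x, (e x).symm⟩
    · rintro ⟨x, hx⟩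
      refine ⟨x, Finsupp.ext fun a => ?_⟩
      exact (e x).trans hx
  exact_zero := by
    intro x
    simp only [LinearMap.comp_apply, LinearEquiv.coe_coe, LinearEquiv.map_eq_zero_iff]
    constructor
    · rintro ⟨y, rfl⟩; exact TT_TT g 0 y
    · exact TT_exact g 0 x
  exact_succ := by
    intro i x
    constructor
    · rintro ⟨y, rfl⟩; exact TT_TT g (i + 1) y
    · exact TT_exact g (i + 1) x
  aug_graded := by
    refine Graded.comp (dβ := fun τ : Fin 0 → α => (LL g τ).degree) ?_ (TT_graded g 0)
    intro p x hx a u hu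
    have := hx default u (by simpa [Finsupp.domLCongr_apply] using hu)
    simpa [LL, Finsupp.bot_eq_zero] using this
  d_graded := fun i => TT_graded g (i + 1)

theorem betti_span {α : Type} [Finite α] (g : α → σ →₀ ℕ) (δ : ∀ i, (Fin i → α) → ℕ)
    (hδ : ∀ i τ, (LL g τ).degree = δ i τ) (i j : ℕ) :
    betti k σ (Ideal.span (Set.range fun a => (monomial (g a) 1 : MvPolynomial σ k))) i j =
      tdim (fun i => δ (i + 1)) (fun i => BB k δ (i + 1)) i j := by
  have : δ = fun i τ => (LL g τ).degree := by funext i τ; rw [hδ]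
  subst this
  rw [betti_eq_tdim (TFR g)]
  have h : (fun n => bar ((TFR (k := k) g).d n)) =
      fun i => BB k (fun _ τ => (LL g τ).degree) (i + 1) := by
    funext n
    exact bar_TT g (n + 1)
  exact congrArg (fun D => tdim (ι := fun i => Fin (i + 1) → α)
    (fun i τ => (LL g τ).degree) D i j) h


theorem polarize_apply [DecidableEq σ] (u : σ →₀ ℕ) (p : σ × ℕ) :
    polarize σ u p = if p.2 < u p.1 then 1 else 0 := by
  classical
  obtain ⟨i, j⟩ := p
  unfold polarize Finsupp.sum
  simp only [Finsupp.finset_sum_apply, Finsupp.single_apply, Prod.mk.injEq]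
  rw [Finset.sum_eq_single i]
  · simp
  · intro b _ hb
    simp [hb]
  · intro h
    simp at h
    simp [h]

theorem polarize_degree (u : σ →₀ ℕ) : (polarize σ u).degree = u.degree := by
  classical
  unfold polarize Finsupp.sum
  simp [map_sum, Finsupp.degree_single, Finsupp.degree_apply]

theorem polarize_sup (a b : σ →₀ ℕ) : polarize σ (a ⊔ b) = polarize σ a ⊔ polarize σ b := by
  classical
  ext p
  rw [Finsupp.sup_apply, polarize_apply, polarize_apply, polarize_apply, Finsupp.sup_apply]
  split_ifs <;> simp_all

theorem polarize_bot : polarize σ ⊥ = ⊥ := by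
  rw [Finsupp.bot_eq_zero, Finsupp.bot_eq_zero]
  simp [polarize]

theorem polarize_le (a b : σ →₀ ℕ) (h : polarize σ a ≤ polarize σ b) : a ≤ b := by
  classical
  intro i
  by_contra hc
  have := h (i, b i)
  rw [polarize_apply, polarize_apply] at this
  simp at this
  omega

theorem LL_polarize {α : Type} (g : α → σ →₀ ℕ) {i : ℕ} (τ : Fin i → α) :
    LL (fun a => polarize σ (g a)) τ = polarize σ (LL g τ) := by
  unfold LL
  exact (Finset.comp_sup_eq_sup_comp (polarize σ) polarize_sup polarize_bot).symm

theorem mem_span_mon (A : Set (σ →₀ ℕ)) (a : σ →₀ ℕ) :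
    (monomial a 1 : MvPolynomial σ k) ∈
      Ideal.span ((fun s => (monomial s 1 : MvPolynomial σ k)) '' A) ↔ ∃ b ∈ A, b ≤ a := by
  rw [MvPolynomial.mem_ideal_span_monomial_image]
  classical
  simp [support_monomial]

theorem fg_finite (A : Set (σ →₀ ℕ)) (hA : ∀ a ∈ A, ∀ b ∈ A, b ≤ a → b = a)
    (h : (Ideal.span ((fun s => (monomial s 1 : MvPolynomial σ k)) '' A)).FG) : A.Finite := by
  classical
  obtain ⟨t, ht, hs⟩ := Submodule.fg_span_iff_fg_span_finset_subset _ |>.1 h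
  obtain ⟨T, hTA, hT⟩ := Finset.subset_set_image_iff.1 ht
  refine (Finset.finite_toSet T).subset fun a ha => ?_
  have h1 : (monomial a 1 : MvPolynomial σ k) ∈
      Ideal.span ((fun s => (monomial s 1 : MvPolynomial σ k)) '' (T : Set (σ →₀ ℕ))) := by
    have h2 : (monomial a 1 : MvPolynomial σ k) ∈
      Ideal.span ((fun s => (monomial s 1 : MvPolynomial σ k)) '' A) :=
      Ideal.subset_span ⟨a, ha, rfl⟩
    have h3 : (monomial a 1 : MvPolynomial σ k) ∈ Submodule.span (MvPolynomial σ k)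
        (t : Set (MvPolynomial σ k)) := by
      rw [← hs]; exact h2
    rw [← hT] at h3
    simpa using h3
  obtain ⟨b, hb, hba⟩ := (mem_span_mon _ _).1 h1
  rw [← hA a ha b (hTA hb) hba]
  exact hb

theorem betti_not_fg (I : Ideal (MvPolynomial σ k)) (h : ¬ I.FG) (i j : ℕ) :
    betti k σ I i j = 0 := by
  unfold betti
  have : { r | ∃ F : GradedFreeRes k σ I,
      r = (Finset.univ.filter (fun b => F.deg i b = j)).card } = ∅ := by
    ext r
    simp only [Set.mem_setOf_eq, Set.mem_empty_iff_false, iff_false]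
    rintro ⟨F, -⟩
    apply h
    rw [← F.aug_range, LinearMap.range_eq_map]
    exact Submodule.FG.map _ Module.Finite.fg_top
  rw [this]
  simp

theorem span_minGens (I : Ideal (MvPolynomial σ k)) (hI : IsMonomialIdeal k σ I) :
    I = Ideal.span ((fun s => (monomial s 1 : MvPolynomial σ k)) '' minGens k σ I) := by
  apply le_antisymm
  · obtain ⟨A, hA⟩ := hI
    have key : ∀ n : ℕ, ∀ a : σ →₀ ℕ, a.degree = n → mon k σ a ∈ I →
        ∃ b ∈ minGens k σ I, b ≤ a := by
      intro n
      induction n using Nat.strong_induction_on with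
      | _ n ih =>
        intro a han ha
        by_cases hm : a ∈ minGens k σ I
        · exact ⟨a, hm, le_rfl⟩
        · simp only [minGens, Set.mem_setOf_eq, not_and, not_forall] at hm
          obtain ⟨b, hb, hba, hne⟩ := hm ha
          have hlt : b.degree < n := by
            obtain ⟨c, rfl⟩ := le_iff_exists_add.1 hba
            have hc : c.degree ≠ 0 := by
              rw [Ne, Finsupp.degree_eq_zero_iff]
              rintro rfl
              simp at hne
            rw [map_add] at han
            omega
          obtain ⟨c, hc, hcb⟩ := ih _ hlt b rfl hb
          exact ⟨c, hc, hcb.trans hba⟩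
    conv_lhs => rw [hA]
    rw [Ideal.span_le]
    rintro _ ⟨a, ha, rfl⟩
    have hm : mon k σ a ∈ I := by
      rw [hA]; exact Ideal.subset_span ⟨a, ha, rfl⟩
    exact (mem_span_mon _ _).2 (key _ a rfl hm)
  · rw [Ideal.span_le]
    rintro _ ⟨a, ha, rfl⟩
    exact ha.1

theorem betti_polar (I : Ideal (MvPolynomial σ k)) (hI : IsMonomialIdeal k σ I) (i j : ℕ) :
    betti k σ I i j = betti k (σ × ℕ) (polarIdeal k σ I) i j := by
  have h1 := span_minGens I hI
  have h2 : polarIdeal k σ I = Ideal.span ((fun s => (monomial s 1 : MvPolynomial (σ × ℕ) k)) ''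
      (polarize σ '' minGens k σ I)) := by
    unfold polarIdeal
    rw [Set.image_image]
  by_cases hf : (minGens k σ I).Finite
  · have : Finite (minGens k σ I) := hf
    have e1 : I = Ideal.span (Set.range fun a : minGens k σ I =>
        (monomial (a : σ →₀ ℕ) 1 : MvPolynomial σ k)) := by
      rw [← Set.image_eq_range (fun s => (monomial s 1 : MvPolynomial σ k))]
      exact h1
    have e2 : polarIdeal k σ I = Ideal.span (Set.range fun a : minGens k σ I =>
        (monomial (polarize σ (a : σ →₀ ℕ)) 1 : MvPolynomial (σ × ℕ) k)) := by
      unfold polarIdeal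
      rw [Set.image_eq_range]
    rw [e2]
    have b1 := betti_span (k := k) (fun a : minGens k σ I => (a : σ →₀ ℕ))
      (fun i τ => (LL (fun a : minGens k σ I => (a : σ →₀ ℕ)) τ).degree) (fun _ _ => rfl) i j
    have b2 := betti_span (k := k) (fun a : minGens k σ I => polarize σ (a : σ →₀ ℕ))
      (fun i τ => (LL (fun a : minGens k σ I => (a : σ →₀ ℕ)) τ).degree)
      (fun _ τ => by rw [LL_polarize, polarize_degree]) i j
    rw [b2, ← b1, ← e1]
  · rw [betti_not_fg, betti_not_fg]
    · rw [h2]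
      intro h
      apply hf
      have := fg_finite _ ?_ h
      · exact Set.Finite.of_finite_image this fun a _ b _ hab =>
          le_antisymm (polarize_le _ _ hab.le) (polarize_le _ _ hab.ge)
      · rintro _ ⟨a, ha, rfl⟩ _ ⟨b, hb, rfl⟩ hab
        rw [ha.2 b hb.1 (polarize_le _ _ hab)]
    · intro h
      rw [h1] at h
      exact hf (fg_finite _ (fun a ha b hb hab => ha.2 b hb.1 hab) h)


end Aux

/-- a monomial ideal and its polarization have the same graded Betti
numbers, and in particular the same regularity. -/
theorem betti_reg_polarization
    (I : Ideal (MvPolynomial σ k)) (hmon : IsMonomialIdeal k σ I) :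
    (∀ i j : ℕ, betti k σ I i j = betti k (σ × ℕ) (polarIdeal k σ I) i j) ∧
    reg k σ I = reg k (σ × ℕ) (polarIdeal k σ I) := by
  have h := betti_polar I hmon
  refine ⟨h, ?_⟩
  unfold reg
  simp only [h]

end PaperReg
end
end
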